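/- arXiv:quant-ph/0512012 — 9 statements merged into one kernel-verified Lean document; each statement's English description precedes it below -/
import Mathlib

section
/- Let d ≥ 2 and let ψ = Σ_{i} a_i |ii⟩ be a unit vector in ℂ^d ⊗ ℂ^d with a_i ≥ 0 and Σ_i a_i² = 1. Then: (a) the matrix ψψ† + Σ_{i≠j} a_i a_j |ij⟩⟨ij| is separable; and (b) for every positive semidefinite matrix σ on ℂ^d ⊗ ℂ^d with Tr σ = 1 and every t ≥ 0, if ψψ† + t·σ is separable then t ≥ (Σ_i a_i)² − 1. Hence the generalised robustness (and the robustness) of ψ equals (Σ_i a_i)² − 1. -/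
open Matrix BigOperators Kronecker ComplexOrder

/-- The d×d matrix `M_v` associated with a vector `v` on ℂ^d ⊗ ℂ^d, `(M_v)_{ij} = v (i,j)`. -/
def toMat (d : ℕ) (v : Fin d × Fin d → ℂ) : Matrix (Fin d) (Fin d) ℂ :=
  Matrix.of fun i j => v (i, j)

/-- `ρ` has Schmidt number at most `n`: it is a finite sum of `w wᴴ` with each `w` of
Schmidt rank (i.e. rank of the associated d×d matrix) at most `n`. -/
def SchmidtNumberLE (d : ℕ) (ρ : Matrix (Fin d × Fin d) (Fin d × Fin d) ℂ) (n : ℕ) : Prop :=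
  ∃ (k : ℕ) (w : Fin k → (Fin d × Fin d → ℂ)),
    (∀ i, (toMat d (w i)).rank ≤ n) ∧
    ρ = ∑ i, Matrix.vecMulVec (w i) (star (w i))

/-- The vector `Σ_i a_i |ii⟩`. -/
noncomputable def ketDiag (d : ℕ) (a : Fin d → ℝ) : Fin d × Fin d → ℂ :=
  fun p => if p.1 = p.2 then ((a p.1 : ℝ) : ℂ) else 0

lemma aux_rank_one {d : ℕ} (M : Matrix (Fin d) (Fin d) ℂ) (h : M.rank ≤ 1) :
    ∃ u v : Fin d → ℂ, ∀ i j, M i j = u i * v j := by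
  rw [Matrix.rank, finrank_le_one_iff] at h
  obtain ⟨u, hu⟩ := h
  choose c hc using fun j => hu ⟨M.mulVecLin (Pi.single j 1), LinearMap.mem_range_self _ _⟩
  refine ⟨u.1, c, fun i j => ?_⟩
  have := congrFun (congrArg Subtype.val (hc j)) i
  simp at this
  rw [← this, mul_comm]

lemma aux_cs {d : ℕ} (w : Fin d × Fin d → ℂ) (h : (toMat d w).rank ≤ 1) :
    ‖∑ i, w (i, i)‖ ^ 2 ≤ ∑ p, ‖w p‖ ^ 2 := by
  obtain ⟨u, v, huv⟩ := aux_rank_one _ h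
  have hw : ∀ i j, w (i, j) = u i * v j := huv
  rw [Fintype.sum_prod_type]
  simp only [hw, norm_mul, mul_pow]
  simp only [← Finset.mul_sum]
  rw [← Finset.sum_mul]
  refine le_trans ?_ (Finset.sum_mul_sq_le_sq_mul_sq _ _ _)
  gcongr
  refine (norm_sum_le _ _).trans (by simp)

lemma aux_entry {d : ℕ} (w : Fin d × Fin d → ℂ) :
    ∑ i, ∑ k, (vecMulVec w (star w) (i, i) (k, k)) = ((‖∑ i, w (i, i)‖ ^ 2 : ℝ) : ℂ) := by
  push_cast
  rw [← Complex.mul_conj', map_sum, Finset.sum_mul_sum]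
  simp [vecMulVec_apply]

lemma aux_trace {d : ℕ} (w : Fin d × Fin d → ℂ) :
    (vecMulVec w (star w)).trace = ((∑ p, ‖w p‖ ^ 2 : ℝ) : ℂ) := by
  push_cast
  simp [Matrix.trace, vecMulVec_apply, Complex.mul_conj']

lemma aux_sep {d : ℕ} (ρ : Matrix (Fin d × Fin d) (Fin d × Fin d) ℂ)
    (h : SchmidtNumberLE d ρ 1) :
    (∑ i, ∑ k, ρ (i, i) (k, k)).re ≤ ρ.trace.re := by
  obtain ⟨k, w, hw, rfl⟩ := h
  have h1 : ∑ i, ∑ j, (∑ m, vecMulVec (w m) (star (w m))) (i, i) (j, j)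
      = ∑ m, ((‖∑ i, w m (i, i)‖ ^ 2 : ℝ) : ℂ) := by
    simp only [← aux_entry, Matrix.sum_apply]
    rw [Finset.sum_comm]
    simp_rw [fun i => Finset.sum_comm (s := Finset.univ (α := Fin d)) (t := Finset.univ (α := Fin k))
      (f := fun j m => vecMulVec (w m) (star (w m)) (j, j) (i, i))]
    rw [Finset.sum_comm]
    refine Finset.sum_congr rfl fun m _ => Finset.sum_comm
  rw [h1, Matrix.trace_sum]
  simp only [aux_trace, ← Complex.ofReal_sum, Complex.ofReal_re]
  exact Finset.sum_le_sum fun m _ => aux_cs _ (hw m)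

lemma aux_psd {d : ℕ} (σ : Matrix (Fin d × Fin d) (Fin d × Fin d) ℂ) (h : σ.PosSemidef) :
    0 ≤ (∑ i, ∑ k, σ (i, i) (k, k)).re := by
  have h2 := h.dotProduct_mulVec_nonneg (fun p : Fin d × Fin d => if p.1 = p.2 then (1:ℂ) else 0)
  have h3 := (Complex.le_def.1 h2).1
  rw [Complex.zero_re] at h3
  convert h3 using 2
  simp [dotProduct, mulVec, Fintype.sum_prod_type, apply_ite]

lemma aux_comb {d : ℕ} (i j k l : Fin d)
    (h : ∀ x : Fin d → ZMod 3, x i - x j - x k + x l = 0) :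
    (i = j ∧ k = l) ∨ (i = k ∧ j = l) := by
  have e0 : (1 : ZMod 3) ≠ 0 := by decide
  have e1 : (1 + 1 : ZMod 3) ≠ 0 := by decide
  have e2 : (-1 : ZMod 3) ≠ 0 := by decide
  have e3 : (-1 - 1 : ZMod 3) ≠ 0 := by decide
  have hi := h (Pi.single i 1)
  have hj := h (Pi.single j 1)
  have hk := h (Pi.single k 1)
  simp only [Pi.single_apply] at hi hj hk
  by_cases h1 : i = j <;> by_cases h2 : i = k <;> by_cases h3 : i = l <;>
  by_cases h4 : j = k <;> by_cases h5 : j = l <;> by_cases h6 : k = l <;>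
  simp_all [eq_comm]

lemma aux_charsum {d : ℕ} (i j k l : Fin d) :
    ∑ x : Fin d → ZMod 3, (ZMod.stdAddChar (x i - x j - x k + x l) : ℂ)
      = if (i = j ∧ k = l) ∨ (i = k ∧ j = l) then (3 : ℂ) ^ d else 0 := by
  classical
  let f : (Fin d → ZMod 3) →+ ZMod 3 :=
    Pi.evalAddMonoidHom (fun _ => ZMod 3) i - Pi.evalAddMonoidHom (fun _ => ZMod 3) j - Pi.evalAddMonoidHom (fun _ => ZMod 3) k
      + Pi.evalAddMonoidHom (fun _ => ZMod 3) l
  let χ : AddChar (Fin d → ZMod 3) ℂ := (ZMod.stdAddChar (N := 3)).compAddMonoidHom f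
  have hχ : ∀ x, χ x = ZMod.stdAddChar (x i - x j - x k + x l) := fun x => rfl
  simp only [← hχ]
  split_ifs with h
  · have : ∀ x, χ x = 1 := by
      intro x
      rw [hχ]
      rcases h with ⟨rfl, rfl⟩ | ⟨rfl, rfl⟩ <;> simp
    simp [this]
  · rw [AddChar.sum_eq_zero_iff_ne_zero]
    intro h0
    apply h
    apply aux_comb
    intro x
    apply ZMod.injective_stdAddChar (N := 3)
    rw [← hχ, h0]
    simp

lemma aux_fin {d : ℕ} {ι : Type} [Fintype ι] (ρ : Matrix (Fin d × Fin d) (Fin d × Fin d) ℂ)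
    (w : ι → (Fin d × Fin d → ℂ)) (hw : ∀ i, (toMat d (w i)).rank ≤ 1)
    (h : ρ = ∑ i, vecMulVec (w i) (star (w i))) : SchmidtNumberLE d ρ 1 := by
  refine ⟨Fintype.card ι, fun m => w ((Fintype.equivFin ι).symm m), fun m => hw _, ?_⟩
  rw [h]
  exact ((Fintype.equivFin ι).symm.sum_comp (fun i => vecMulVec (w i) (star (w i)))).symm

lemma aux_a (d : ℕ) (a : Fin d → ℝ) (ha : ∀ i, 0 ≤ a i) :
    SchmidtNumberLE d
      (Matrix.vecMulVec (ketDiag d a) (star (ketDiag d a)) +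
        Matrix.diagonal (fun p : Fin d × Fin d =>
          if p.1 ≠ p.2 then ((a p.1 * a p.2 : ℝ) : ℂ) else 0)) 1 := by
  let c : ℂ := ((√((3:ℝ) ^ d))⁻¹ : ℝ)
  have hc : c * c * 3 ^ d = 1 := by
    have : (√((3:ℝ) ^ d))⁻¹ * (√((3:ℝ) ^ d))⁻¹ * 3 ^ d = 1 := by
      rw [← mul_inv, Real.mul_self_sqrt (by positivity)]
      exact inv_mul_cancel₀ (by positivity)
    have h' := congrArg (fun r : ℝ => (r : ℂ)) this
    simpa [c] using h'
  let s : Fin d → ℂ := fun i => ((√(a i) : ℝ) : ℂ)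
  have hs : ∀ i, s i * s i = (a i : ℂ) := fun i => by
    have := Real.mul_self_sqrt (ha i)
    have h' := congrArg (fun r : ℝ => (r : ℂ)) this
    simpa only [Complex.ofReal_mul] using h'
  have hcs : star c = c := Complex.conj_ofReal _
  have hss : ∀ i, star (s i) = s i := fun i => Complex.conj_ofReal _
  let e : ZMod 3 → ℂ := fun z => ZMod.stdAddChar z
  have he : ∀ z, star (e z) = e (-z) := fun z => (AddChar.map_neg_eq_conj _ z).symm
  have hadd : ∀ y z, e (y + z) = e y * e z := fun y z => AddChar.map_add_eq_mul _ y z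
  refine aux_fin _ (fun (x : Fin d → ZMod 3) p => (c * s p.1 * e (x p.1)) * (s p.2 * e (- x p.2)))
    (fun x => ?_) ?_
  · exact Matrix.rank_vecMulVec_le (fun i => c * s i * e (x i)) (fun j => s j * e (- x j))
  · ext ⟨i, j⟩ ⟨k, l⟩
    rw [Matrix.sum_apply]
    have key : ∀ x : Fin d → ZMod 3,
        vecMulVec (fun p : Fin d × Fin d => (c * s p.1 * e (x p.1)) * (s p.2 * e (- x p.2)))
          (star (fun p : Fin d × Fin d => (c * s p.1 * e (x p.1)) * (s p.2 * e (- x p.2))))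
          (i, j) (k, l) = (c * c * s i * s j * s k * s l) * e (x i - x j - x k + x l) := by
      intro x
      simp only [vecMulVec_apply, Pi.star_apply, star_mul', hcs, hss, he, neg_neg, sub_eq_add_neg,
        hadd]
      ring
    simp only [key]
    rw [← Finset.mul_sum, aux_charsum]
    simp only [Matrix.add_apply, vecMulVec_apply, Matrix.diagonal_apply, ketDiag, Pi.star_apply,
      Prod.mk.injEq]
    by_cases h1 : i = j ∧ k = l
    · obtain ⟨rfl, rfl⟩ := h1
      simp only [true_and, and_self, true_or, if_true]
      simp only [ne_eq, not_true_eq_false, if_false, ite_self, add_zero]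
      rw [Complex.star_def, Complex.conj_ofReal, ← hs, ← hs]
      linear_combination (- s i * s i * s k * s k) * hc
    · by_cases h2 : i = k ∧ j = l
      · obtain ⟨rfl, rfl⟩ := h2
        have : i ≠ j := fun h => h1 ⟨h, h⟩
        simp only [this, ne_eq, not_false_eq_true, if_true, if_false, and_self, or_true, zero_mul,
          zero_add]
        push_cast
        rw [← hs, ← hs]
        linear_combination (- s i * s i * s j * s j) * hc
      · simp only [h1, h2, or_self, if_false, mul_zero, add_zero]
        by_cases h3 : i = j
        · have : k ≠ l := fun h => h1 ⟨h3, h⟩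
          simp [this]
        · simp [h3]

/-- Robustness of a pure state: (a) `ψψᴴ + Σ_{i≠j} a_i a_j |ij⟩⟨ij|` is separable;
(b) no trace-one psd `σ` does better than `t = (Σ_i a_i)² - 1`. -/
theorem robustness_pure_state (d : ℕ) (hd : 2 ≤ d)
    (a : Fin d → ℝ) (ha : ∀ i, 0 ≤ a i) (hnorm : ∑ i, a i ^ 2 = 1) :
    SchmidtNumberLE d
      (Matrix.vecMulVec (ketDiag d a) (star (ketDiag d a)) +
        Matrix.diagonal (fun p : Fin d × Fin d =>
          if p.1 ≠ p.2 then ((a p.1 * a p.2 : ℝ) : ℂ) else 0)) 1 ∧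
    ∀ (σ : Matrix (Fin d × Fin d) (Fin d × Fin d) ℂ), σ.PosSemidef → σ.trace = 1 →
      ∀ t : ℝ, 0 ≤ t →
        SchmidtNumberLE d
          (Matrix.vecMulVec (ketDiag d a) (star (ketDiag d a)) + t • σ) 1 →
        (∑ i, a i) ^ 2 - 1 ≤ t := by
  refine ⟨aux_a d a ha, fun σ hσ htr t ht h => ?_⟩
  have h1 := aux_sep _ h
  have h2 := aux_psd σ hσ
  rw [Matrix.trace_add, Matrix.trace_smul, htr, aux_trace] at h1
  simp only [Matrix.add_apply, Matrix.smul_apply, Finset.sum_add_distrib, aux_entry,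
    ← Finset.smul_sum] at h1
  rw [Complex.add_re, Complex.add_re, Complex.smul_re, Complex.smul_re, Complex.ofReal_re,
    Complex.ofReal_re] at h1
  have h3 : ‖∑ i, ketDiag d a (i, i)‖ ^ 2 = (∑ i, a i) ^ 2 := by
    simp only [ketDiag, if_true, ← Complex.ofReal_sum, Complex.norm_real, Real.norm_eq_abs, sq_abs]
  have h4 : ∑ p, ‖ketDiag d a p‖ ^ 2 = 1 := by
    rw [← hnorm, Fintype.sum_prod_type]
    refine Finset.sum_congr rfl fun i _ => ?_
    rw [Finset.sum_eq_single i]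
    · simp [ketDiag]
    · intro j _ hj
      simp [ketDiag, hj.symm]
    · simp
  rw [h3, h4] at h1
  simp only [smul_eq_mul, Complex.one_re, mul_one] at h1
  have := mul_nonneg ht h2
  linarith
end

section
/- Let d ≥ 2 and let ψ = Σ_{i} a_i |ii⟩ be a unit vector in ℂ^d ⊗ ℂ^d with ordered coefficients a_1 ≥ a_2 ≥ … ≥ a_d ≥ 0 and Σ_i a_i² = 1. Then: (a) the matrix ψψ† + a_1 a_2 · 𝟙 is separable; and (b) for every t ≥ 0, if ψψ† + t·𝟙 is separable then t ≥ a_1 a_2. Hence the random robustness of ψ equals a_1 a_2. -/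
open Matrix BigOperators Kronecker ComplexOrder

lemma rr_minor {d : ℕ} (w : Fin d × Fin d → ℂ) (h : (toMat d w).rank ≤ 1) (i j k l : Fin d) :
    w (i, k) * w (j, l) = w (i, l) * w (j, k) := by
  rw [Matrix.rank_eq_finrank_span_cols, finrank_le_one_iff] at h
  obtain ⟨v, hv⟩ := h
  have key : ∀ c : Fin d, ∃ r : ℂ, ∀ x : Fin d, w (x, c) = r * v.1 x := by
    intro c
    obtain ⟨r, hr⟩ := hv ⟨(toMat d w).col c, Submodule.subset_span ⟨c, rfl⟩⟩
    refine ⟨r, fun x => ?_⟩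
    have := congrFun (congrArg Subtype.val hr) x
    exact this.symm
  obtain ⟨r, hr⟩ := key k
  obtain ⟨s, hs⟩ := key l
  rw [hr, hr, hs, hs]; ring

lemma rr_sidon (i j k l : ℕ) (h : 2 ^ i + 2 ^ l = 2 ^ j + 2 ^ k) :
    (i = j ∧ l = k) ∨ (i = k ∧ l = j) := by
  induction i generalizing j k l with
  | zero =>
    rcases l with _ | l <;> rcases j with _ | j <;> rcases k with _ | k <;>
      simp only [pow_succ, pow_zero] at h <;> try omega
    · have := Nat.two_pow_pos j
      have := Nat.two_pow_pos k
      omega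
    · have h2 : 2 ^ l = 2 ^ k := by omega
      have := Nat.pow_right_injective le_rfl h2
      omega
    · have h2 : 2 ^ l = 2 ^ j := by omega
      have := Nat.pow_right_injective le_rfl h2
      omega
  | succ i ih =>
    have := Nat.two_pow_pos i
    rcases l with _ | l <;> rcases j with _ | j <;> rcases k with _ | k <;>
      simp only [pow_succ, pow_zero] at h <;> try omega
    · have h2 : 2 ^ i = 2 ^ k := by omega
      have := Nat.pow_right_injective le_rfl h2
      omega
    · have h2 : 2 ^ i = 2 ^ j := by omega
      have := Nat.pow_right_injective le_rfl h2
      omega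
    · have := Nat.two_pow_pos l
      omega
    · have := ih j k l (by omega)
      omega

lemma rr_fintype {d n : ℕ} {ι : Type*} [Fintype ι] (w : ι → (Fin d × Fin d → ℂ))
    (h : ∀ i, (toMat d (w i)).rank ≤ n) :
    SchmidtNumberLE d (∑ i, Matrix.vecMulVec (w i) (star (w i))) n :=
  ⟨Fintype.card ι, fun i => w ((Fintype.equivFin ι).symm i), fun i => h _,
    ((Fintype.equivFin ι).symm.sum_comp
      (fun i => Matrix.vecMulVec (w i) (star (w i)))).symm⟩

lemma rr_prod {d : ℕ} (u v : Fin d → ℂ) : (toMat d (fun p => u p.1 * v p.2)).rank ≤ 1 :=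
  Matrix.rank_vecMulVec_le u v

/-- Orthogonality of phases. -/
lemma rr_phase (d : ℕ) : ∃ (N : ℕ) (z : Fin N → Fin d → ℂ), N ≠ 0 ∧
    ∀ i j k l : Fin d,
      ∑ t, z t i * star (z t j) * star (z t k * star (z t l)) =
        if (i = j ∧ l = k) ∨ (i = k ∧ l = j) then (N : ℂ) else 0 := by
  have hN : 2 ^ (d + 1) ≠ 0 := by positivity
  have hp := Complex.isPrimitiveRoot_exp (2 ^ (d + 1)) hN
  generalize hNN : 2 ^ (d + 1) = N at hp hN
  generalize Complex.exp _ = ζ at hp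
  have hz0 : ζ ≠ 0 := hp.ne_zero hN
  have hstar : star ζ = ζ⁻¹ := by
    have h1 : ‖ζ‖ = 1 := hp.norm'_eq_one hN
    rw [Complex.inv_eq_conj h1]; rfl
  refine ⟨N, fun t i => (ζ ^ (2 ^ (i : ℕ))) ^ (t : ℕ), hN, fun i j k l => ?_⟩
  set e : ℤ := 2 ^ (i : ℕ) + 2 ^ (l : ℕ) - (2 ^ (j : ℕ) + 2 ^ (k : ℕ)) with he
  have hterm : ∀ t : Fin N, (ζ ^ (2 ^ (i : ℕ))) ^ (t : ℕ) * star ((ζ ^ (2 ^ (j : ℕ))) ^ (t : ℕ)) *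
      star ((ζ ^ (2 ^ (k : ℕ))) ^ (t : ℕ) * star ((ζ ^ (2 ^ (l : ℕ))) ^ (t : ℕ)))
      = (ζ ^ e) ^ (t : ℕ) := by
    intro t
    rw [star_mul, star_star, star_pow, star_pow, star_pow, star_pow, hstar, he,
      zpow_sub₀ hz0, zpow_add₀ hz0, zpow_add₀ hz0, ← mul_pow, ← mul_pow, ← mul_pow]
    congr 1
    have (n : ℕ) : ζ ^ ((2 : ℤ) ^ n) = ζ ^ (2 ^ n) := by
      rw [← zpow_natCast]; push_cast; rfl
    simp only [this, inv_pow]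
    field_simp
  simp only [hterm]
  rw [Fin.sum_univ_eq_sum_range (fun t => (ζ ^ e) ^ t)]
  have hcond : ζ ^ e = 1 ↔ ((i = j ∧ l = k) ∨ (i = k ∧ l = j)) := by
    rw [hp.zpow_eq_one_iff_dvd]
    constructor
    · intro h
      have hb : ∀ x : Fin d, 0 < 2 ^ (x : ℕ) ∧ 2 * 2 ^ (x : ℕ) ≤ 2 ^ d := fun x =>
        ⟨by positivity, by rw [← pow_succ']; exact Nat.pow_le_pow_right (by norm_num) x.2⟩
      have hi := hb i
      have hj := hb j
      have hk := hb k
      have hl := hb l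
      rw [pow_succ] at hNN
      have h0 : e = 0 := by
        apply Int.eq_zero_of_abs_lt_dvd h
        rw [abs_lt]
        zify at hi hj hk hl hNN
        constructor <;> linarith
      have := rr_sidon i j k l (by zify; linarith)
      simpa [Fin.ext_iff] using this
    · rintro (⟨rfl, rfl⟩ | ⟨rfl, rfl⟩)
      · simp [he]
      · simp [he, add_comm]
  split_ifs with h
  · rw [hcond.2 h]; simp
  · have hne : ζ ^ e ≠ 1 := fun h' => h (hcond.1 h')
    have h1 : (ζ ^ e) ^ N = 1 := by
      rw [← zpow_natCast, ← _root_.zpow_mul, mul_comm, _root_.zpow_mul, zpow_natCast, hp.pow_eq_one, _root_.one_zpow]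
    rw [geom_sum_eq hne, h1]; simp

lemma rr_lower {d : ℕ} (a : Fin d → ℝ) (i j : Fin d) (hij : i ≠ j) (t : ℝ)
    (h : SchmidtNumberLE d
        (Matrix.vecMulVec (ketDiag d a) (star (ketDiag d a)) +
          t • (1 : Matrix (Fin d × Fin d) (Fin d × Fin d) ℂ)) 1) : a i * a j ≤ t := by
  obtain ⟨k, w, hw, he⟩ := h
  have e1 := congrFun (congrFun he (i, i)) (j, j)
  have e2 := congrFun (congrFun he (i, j)) (i, j)
  have e3 := congrFun (congrFun he (j, i)) (j, i)
  simp [Matrix.sum_apply, Matrix.vecMulVec_apply, ketDiag, hij, hij.symm, Complex.mul_conj] at e1 e2 e3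
  norm_cast at e2 e3
  have f1 := congrArg Complex.re e1
  have : a i * a j ≤ ∑ x, (Complex.normSq (w x (i, j)) + Complex.normSq (w x (j, i))) / 2 := by
    have : a i * a j = ∑ x, (w x (i, i) * (starRingEnd ℂ) (w x (j, j))).re := by
      rw [← Complex.re_sum, ← f1]; simp
    rw [this]
    refine Finset.sum_le_sum fun x _ => (Complex.re_le_norm _).trans ?_
    rw [norm_mul, Complex.norm_conj, ← norm_mul, rr_minor (w x) (hw x) i j i j, norm_mul,
      Complex.normSq_eq_norm_sq, Complex.normSq_eq_norm_sq]
    nlinarith [sq_nonneg (‖w x (i, j)‖ - ‖w x (j, i)‖)]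
  rw [← Finset.sum_div, Finset.sum_add_distrib, ← e2, ← e3] at this
  linarith

lemma rr_upper {d : ℕ} (a : Fin d → ℝ) (ha : ∀ i, 0 ≤ a i) (s : ℝ) (hs0 : 0 ≤ s)
    (hs : ∀ i j, i ≠ j → a i * a j ≤ s) :
    SchmidtNumberLE d
        (Matrix.vecMulVec (ketDiag d a) (star (ketDiag d a)) +
          s • (1 : Matrix (Fin d × Fin d) (Fin d × Fin d) ℂ)) 1 := by
  obtain ⟨N, z, hN, hz⟩ := rr_phase d
  let c : Fin d × Fin d → ℝ := fun p => if p.1 = p.2 then s else s - a p.1 * a p.2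
  have hc : ∀ p, 0 ≤ c p := by
    intro p
    by_cases h : p.1 = p.2
    · simp [c, h, hs0]
    · simp [c, h, hs _ _ h]
  let r : ℝ := √((N : ℝ)⁻¹)
  have hr : (r : ℂ) * r = (N : ℂ)⁻¹ := by
    rw [← Complex.ofReal_mul, Real.mul_self_sqrt (by positivity)]; simp
  have hq : ∀ i, ((√(a i) : ℝ) : ℂ) * (√(a i) : ℝ) = a i := fun i => by
    rw [← Complex.ofReal_mul, Real.mul_self_sqrt (ha i)]
  have hcq : ∀ i, ((√(c i) : ℝ) : ℂ) * (√(c i) : ℝ) = c i := fun i => by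
    rw [← Complex.ofReal_mul, Real.mul_self_sqrt (hc i)]
  let w : Fin N ⊕ (Fin d × Fin d) → (Fin d × Fin d → ℂ) := Sum.elim
    (fun t p => ((r : ℂ) * ((√(a p.1) : ℝ) * z t p.1)) * ((√(a p.2) : ℝ) * star (z t p.2)))
    (fun q p => (((√(c q) : ℝ) : ℂ) * if p.1 = q.1 then 1 else 0) * (if p.2 = q.2 then 1 else 0))
  convert rr_fintype w ?_ using 1
  · ext ⟨i, j⟩ ⟨k, l⟩
    rw [Fintype.sum_sum_type, Matrix.add_apply, Matrix.add_apply, Matrix.sum_apply,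
      Matrix.sum_apply]
    have hA : ∑ t, Matrix.vecMulVec (w (Sum.inl t)) (star (w (Sum.inl t))) (i, j) (k, l) =
        (N : ℂ)⁻¹ * ((√(a i) : ℝ) * (√(a j) : ℝ) * (√(a k) : ℝ) * (√(a l) : ℝ)) *
        if (i = j ∧ l = k) ∨ (i = k ∧ l = j) then (N : ℂ) else 0 := by
      rw [← hz, Finset.mul_sum]
      refine Finset.sum_congr rfl fun t _ => ?_
      rw [← hr]
      simp [w, Matrix.vecMulVec_apply]
      ring
    have hB : ∑ q, Matrix.vecMulVec (w (Sum.inr q)) (star (w (Sum.inr q))) (i, j) (k, l) =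
        if i = k ∧ j = l then (c (i, j) : ℂ) else 0 := by
      rw [Finset.sum_eq_single (i, j)]
      · simp only [w, Matrix.vecMulVec_apply, Sum.elim_inr, Pi.star_apply]
        by_cases h1 : i = k <;> by_cases h2 : j = l <;> simp [h1, h2, eq_comm, hcq]
      · rintro ⟨x, y⟩ _ hne
        simp only [w, Matrix.vecMulVec_apply, Sum.elim_inr, Pi.star_apply]
        by_cases h1 : i = x <;> by_cases h2 : j = y <;> simp_all
      · simp
    have hN' : (N : ℂ) ≠ 0 := by exact_mod_cast hN
    have hA' : (N : ℂ)⁻¹ * ((√(a i) : ℝ) * (√(a j) : ℝ) * (√(a k) : ℝ) * (√(a l) : ℝ)) *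
        (if (i = j ∧ l = k) ∨ (i = k ∧ l = j) then (N : ℂ) else 0) =
        if i = j ∧ l = k then (a i : ℂ) * a k else if i = k ∧ l = j then (a i : ℂ) * a j else 0 := by
      by_cases h1 : i = j ∧ l = k
      · obtain ⟨rfl, rfl⟩ := h1
        simp only [and_self, true_or, if_true]
        rw [← hq i, ← hq l]
        field_simp
      · by_cases h2 : i = k ∧ l = j
        · rw [if_pos (Or.inr h2), if_neg h1, if_pos h2]
          obtain ⟨rfl, rfl⟩ := h2
          rw [← hq i, ← hq l]
          field_simp
        · simp [h1, h2]
    rw [hA, hB, hA']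
    simp only [Matrix.vecMulVec_apply, Pi.star_apply, ketDiag, Matrix.smul_apply, Matrix.one_apply,
      Prod.mk.injEq, c]
    by_cases h1 : i = j
    · subst h1
      by_cases h2 : l = k
      · subst h2
        by_cases h3 : i = l
        · subst h3
          simp
        · simp [h3]
      · by_cases h3 : i = k
        · subst h3
          simp [h2, Ne.symm h2]
        · simp [h2, Ne.symm h2, h3]
    · by_cases h2 : i = k
      · subst h2
        by_cases h3 : l = j
        · subst h3
          simp [h1]
        · simp [h1, h3, Ne.symm h3]
      · simp [h1, h2]
  · rintro (t | q)
    · exact rr_prod (fun i => (r : ℂ) * ((√(a i) : ℝ) * z t i)) (fun j => (√(a j) : ℝ) * star (z t j))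
    · exact rr_prod (fun i => ((√(c q) : ℝ) : ℂ) * if i = q.1 then 1 else 0)
        (fun j => if j = q.2 then 1 else 0)

/-- Random robustness of a pure state equals `a₁ a₂`. -/
theorem random_robustness_pure_state (d : ℕ) (hd : 2 ≤ d)
    (a : Fin d → ℝ) (ha : ∀ i, 0 ≤ a i)
    (hord : ∀ i j : Fin d, i ≤ j → a j ≤ a i) (hnorm : ∑ i, a i ^ 2 = 1) :
    SchmidtNumberLE d
      (Matrix.vecMulVec (ketDiag d a) (star (ketDiag d a)) +
        (a ⟨0, by omega⟩ * a ⟨1, by omega⟩) •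
          (1 : Matrix (Fin d × Fin d) (Fin d × Fin d) ℂ)) 1 ∧
    ∀ t : ℝ, 0 ≤ t →
      SchmidtNumberLE d
        (Matrix.vecMulVec (ketDiag d a) (star (ketDiag d a)) +
          t • (1 : Matrix (Fin d × Fin d) (Fin d × Fin d) ℂ)) 1 →
      a ⟨0, by omega⟩ * a ⟨1, by omega⟩ ≤ t := by
  refine ⟨rr_upper a ha _ (mul_nonneg (ha _) (ha _)) ?_, fun t _ h =>
    rr_lower a _ _ (by simp) t h⟩
  have main : ∀ i j : Fin d, i < j → a i * a j ≤ a ⟨0, by omega⟩ * a ⟨1, by omega⟩ := by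
    intro i j hij
    have hij' : (i : ℕ) < j := hij
    exact mul_le_mul (hord _ _ (Fin.mk_le_of_le_val (by omega)))
      (hord _ _ (Fin.mk_le_of_le_val (by omega))) (ha _) (ha _)
  intro i j hne
  rcases lt_or_gt_of_ne hne with h | h
  · exact main i j h
  · rw [mul_comm]; exact main j i h
end

section
/- Let d ≥ 2 and 1 ≤ n < d. Then the matrix K = Z + (d(n−1)/(d−n)) · P_+ on ℂ^d ⊗ ℂ^d has Schmidt number at most n. -/
open Matrix BigOperators Kronecker ComplexOrder

/-- The maximally entangled unit vector `ψ₊ = (1/√d) Σ_i |ii⟩`. -/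
noncomputable def psiPlus (d : ℕ) : Fin d × Fin d → ℂ :=
  fun p => if p.1 = p.2 then (((Real.sqrt d)⁻¹ : ℝ) : ℂ) else 0

/-- `P₊ = ψ₊ ψ₊ᴴ`. -/
noncomputable def Pplus (d : ℕ) : Matrix (Fin d × Fin d) (Fin d × Fin d) ℂ :=
  Matrix.vecMulVec (psiPlus d) (star (psiPlus d))

/-- `Z = Σ_i |ii⟩⟨ii|`. -/
noncomputable def Zmat (d : ℕ) : Matrix (Fin d × Fin d) (Fin d × Fin d) ℂ :=
  Matrix.diagonal (fun p => if p.1 = p.2 then (1 : ℂ) else 0)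

theorem schmidt_of_fintype {ι : Type} [Fintype ι] (d n : ℕ)
    (ρ : Matrix (Fin d × Fin d) (Fin d × Fin d) ℂ) (w : ι → (Fin d × Fin d → ℂ))
    (h1 : ∀ i, (toMat d (w i)).rank ≤ n)
    (h2 : ρ = ∑ i, Matrix.vecMulVec (w i) (star (w i))) : SchmidtNumberLE d ρ n := by
  refine ⟨Fintype.card ι, fun i => w ((Fintype.equivFin ι).symm i), fun i => h1 _, ?_⟩
  rw [h2]
  exact (Equiv.sum_comp (Fintype.equivFin ι).symm
    (fun i => Matrix.vecMulVec (w i) (star (w i)))).symm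

/-- number of n-subsets containing i and j -/
def bcount (d n : ℕ) (i j : Fin d) : ℕ :=
  ((Finset.powersetCard n (Finset.univ : Finset (Fin d))).filter (fun S => i ∈ S ∧ j ∈ S)).card

theorem bcount_perm (d n : ℕ) (σ : Equiv.Perm (Fin d)) (i j : Fin d) :
    bcount d n (σ i) (σ j) = bcount d n i j := by
  unfold bcount
  symm
  refine Finset.card_bij' (fun S _ => S.map σ.toEmbedding) (fun S _ => S.map σ.symm.toEmbedding)
    ?_ ?_ ?_ ?_
  · intro S hS
    simpa [Finset.mem_powersetCard] using hS
  · intro S hS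
    simp only [Finset.mem_filter, Finset.mem_powersetCard, Finset.subset_univ, true_and,
      Finset.card_map] at hS ⊢
    refine ⟨hS.1, ?_, ?_⟩
    · exact Finset.mem_map.2 ⟨σ i, hS.2.1, by simp⟩
    · exact Finset.mem_map.2 ⟨σ j, hS.2.2, by simp⟩
  · intro S hS
    ext x; simp
  · intro S hS
    ext x; simp

theorem bcount_diag (d n : ℕ) (i j : Fin d) : bcount d n i i = bcount d n j j := by
  simpa using bcount_perm d n (Equiv.swap i j) j j

theorem bcount_off (d n : ℕ) (i j k : Fin d) (hj : i ≠ j) (hk : i ≠ k) :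
    bcount d n i j = bcount d n i k := by
  have := bcount_perm d n (Equiv.swap j k) i k
  rwa [Equiv.swap_apply_of_ne_of_ne hj hk, Equiv.swap_apply_right] at this

theorem bcount_sum (d n : ℕ) (i : Fin d) : ∑ j, bcount d n i j = n * bcount d n i i := by
  unfold bcount
  simp only [Finset.card_filter, and_self]
  rw [Finset.sum_comm, Finset.mul_sum]
  refine Finset.sum_congr rfl fun S hS => ?_
  have := (Finset.mem_powersetCard.1 hS).2
  by_cases h : i ∈ S <;> simp [h, this]

theorem bcount_rel (d n : ℕ) (i j : Fin d) (hij : i ≠ j) :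
    ((d : ℝ) - 1) * bcount d n i j = ((n : ℝ) - 1) * bcount d n i i := by
  have h := bcount_sum d n i
  rw [← Finset.add_sum_erase _ _ (Finset.mem_univ i),
    Finset.sum_congr rfl (g := fun _ => bcount d n i j) (fun k hk =>
      bcount_off d n i k j (Finset.ne_of_mem_erase hk).symm hij)] at h
  simp only [Finset.sum_const, Finset.card_erase_of_mem (Finset.mem_univ i), Finset.card_univ,
    Fintype.card_fin, smul_eq_mul] at h
  have hd : 1 ≤ d := by have := i.2; omega
  have h' : (bcount d n i i : ℝ) + ((d - 1 : ℕ) : ℝ) * bcount d n i j = n * bcount d n i i := by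
    exact_mod_cast h
  rw [Nat.cast_sub hd] at h'
  push_cast at h'
  linarith

theorem bcount_pos (d n : ℕ) (hn : 1 ≤ n) (hnd : n < d) (i : Fin d) : 0 < bcount d n i i := by
  unfold bcount
  obtain ⟨S, h1, h2, h3⟩ := Finset.exists_subsuperset_card_eq (n := n)
    (Finset.subset_univ ({i} : Finset (Fin d))) (by simpa using hn) (by simpa using hnd.le)
  refine Finset.card_pos.2 ⟨S, ?_⟩
  simp [Finset.mem_powersetCard, h3, Finset.singleton_subset_iff.1 h1]

/-- `K = Z + (d(n-1)/(d-n)) P₊` has Schmidt number at most `n`. -/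
theorem K_schmidt_number (d n : ℕ) (hd : 2 ≤ d) (hn : 1 ≤ n) (hnd : n < d) :
    SchmidtNumberLE d
      (Zmat d + (((d : ℝ) * ((n : ℝ) - 1)) / ((d : ℝ) - (n : ℝ))) • Pplus d) n := by
  classical
  let i0 : Fin d := ⟨0, by omega⟩
  obtain ⟨a, ha⟩ : ∃ a, a = bcount d n i0 i0 := ⟨_, rfl⟩
  have ha0 : (0 : ℝ) < a := by rw [ha]; exact_mod_cast bcount_pos d n hn hnd i0
  have hdn : (0 : ℝ) < (d : ℝ) - n := by
    have : (n : ℝ) < d := by exact_mod_cast hnd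
    linarith
  have hd1 : (0 : ℝ) < (d : ℝ) - 1 := by
    have : (2 : ℝ) ≤ d := by exact_mod_cast hd
    linarith
  obtain ⟨c, hc⟩ : ∃ c : ℝ, c = ((d : ℝ) - 1) / (((d : ℝ) - n) * a) := ⟨_, rfl⟩
  have hc0 : 0 ≤ c := by rw [hc]; positivity
  have key : ∀ i j : Fin d, c * bcount d n i j =
      (if i = j then 1 else 0) + ((n : ℝ) - 1) / ((d : ℝ) - n) := by
    intro i j
    have hi : bcount d n i i = a := by rw [ha]; exact bcount_diag d n i i0
    by_cases hij : i = j
    · subst hij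
      rw [hi, hc, if_pos rfl]
      field_simp
      ring
    · have h := bcount_rel d n i j hij
      rw [hi] at h
      rw [hc, if_neg hij]
      field_simp
      linarith
  let w : Finset (Fin d) → (Fin d × Fin d → ℂ) := fun S p =>
    if p.1 = p.2 then (if S.card = n ∧ p.1 ∈ S then ((Real.sqrt c : ℝ) : ℂ) else 0) else 0
  apply schmidt_of_fintype d n _ w
  · intro S
    have : toMat d (w S) = Matrix.diagonal
        (fun i => if S.card = n ∧ i ∈ S then ((Real.sqrt c : ℝ) : ℂ) else 0) := by
      ext i j
      simp [toMat, w, Matrix.diagonal_apply]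
    rw [this, Matrix.rank_diagonal]
    by_cases hS : S.card = n
    · rw [Fintype.card_subtype, ← hS]
      apply Finset.card_le_card
      intro x hx
      by_contra h
      simp [h] at hx
    · simp [hS]
  · ext ⟨i, i'⟩ ⟨j, j'⟩
    rw [Matrix.sum_apply]
    simp only [Matrix.add_apply, Matrix.smul_apply, Zmat, Pplus, vecMulVec_apply, psiPlus,
      Pi.star_apply, w, Matrix.diagonal_apply]
    by_cases h1 : i = i'
    swap
    · simp [h1]
    by_cases h2 : j = j'
    swap
    · have : ¬ ((i, i') = (j, j')) := by
        rintro h; simp only [Prod.mk.injEq] at h; exact h2 (h.1 ▸ h.2 ▸ h1)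
      simp [h2, this]
    subst h1 h2
    have hs : ∀ S : Finset (Fin d),
        (if S.card = n ∧ i ∈ S then ((Real.sqrt c : ℝ) : ℂ) else 0) *
          star (if S.card = n ∧ j ∈ S then ((Real.sqrt c : ℝ) : ℂ) else 0) =
        ((c * (if S.card = n ∧ i ∈ S ∧ j ∈ S then 1 else 0) : ℝ) : ℂ) := by
      intro S
      have hq : ((Real.sqrt c : ℝ) : ℂ) * ((Real.sqrt c : ℝ) : ℂ) = (c : ℂ) := by
        rw [← Complex.ofReal_mul, Real.mul_self_sqrt hc0]
      by_cases a1 : S.card = n <;> by_cases a2 : i ∈ S <;> by_cases a3 : j ∈ S <;>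
        simp [a1, a2, a3, hq]
    have hb : ∑ S : Finset (Fin d), (if S.card = n ∧ i ∈ S ∧ j ∈ S then (1 : ℝ) else 0)
        = bcount d n i j := by
      rw [Finset.sum_boole]
      unfold bcount
      congr 2
      ext S
      simp [Finset.mem_powersetCard]
    simp only [if_true, hs]
    rw [← Complex.ofReal_sum, ← Finset.mul_sum, hb, key]
    have hq : (((Real.sqrt d)⁻¹ : ℝ) : ℂ) * star (((Real.sqrt d)⁻¹ : ℝ) : ℂ) = ((d : ℝ)⁻¹ : ℝ) := by
      rw [← starRingEnd_apply, Complex.conj_ofReal, ← Complex.ofReal_mul, ← mul_inv,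
        Real.mul_self_sqrt (Nat.cast_nonneg d)]
    rw [hq, Complex.real_smul, ← Complex.ofReal_mul]
    have he : (d : ℝ) * ((n : ℝ) - 1) / ((d : ℝ) - n) * (d : ℝ)⁻¹ = ((n : ℝ) - 1) / ((d : ℝ) - n) := by
      have : (d : ℝ) ≠ 0 := by linarith
      field_simp
    rw [he]
    by_cases hij : i = j <;> simp [hij]
end

section
/- Let d ≥ 2, 1 ≤ n < d, and let a_1, …, a_d ≥ 0. Let ψ = Σ_i a_i |ii⟩. Then the matrix Σ_i a_i² |ii⟩⟨ii| + ((n−1)/(d−n)) · ψψ† on ℂ^d ⊗ ℂ^d has Schmidt number at most n. -/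
open Matrix BigOperators Kronecker ComplexOrder

noncomputable def fInd (d n : ℕ) (k : Fin d) : ℝ := if (k : ℕ) < n then 1 else 0

noncomputable def pairN (d n : ℕ) (i j : Fin d) : ℝ :=
  ∑ σ : Equiv.Perm (Fin d), fInd d n (σ i) * fInd d n (σ j)

lemma fInd_sq (d n : ℕ) (k : Fin d) : fInd d n k * fInd d n k = fInd d n k := by
  unfold fInd; split_ifs <;> simp

lemma card_lt (d n : ℕ) (h : n < d) : (Finset.univ.filter (fun k : Fin d => (k : ℕ) < n)).card = n := by
  rw [Fin.card_filter_val_lt]; omega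

lemma fInd_sum (d n : ℕ) (h : n < d) (σ : Equiv.Perm (Fin d)) : ∑ j, fInd d n (σ j) = n := by
  rw [Equiv.sum_comp σ (fInd d n)]
  simp only [fInd]
  rw [Finset.sum_boole, card_lt d n h]

lemma pairN_inv (d n : ℕ) (τ : Equiv.Perm (Fin d)) (i j : Fin d) :
    pairN d n (τ i) (τ j) = pairN d n i j := by
  unfold pairN
  exact Equiv.sum_comp (Equiv.mulRight τ) (fun σ => fInd d n (σ i) * fInd d n (σ j))

lemma pairN_diag (d n : ℕ) (i j : Fin d) : pairN d n i i = pairN d n j j := by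
  rw [← pairN_inv d n (Equiv.swap i j) i i, Equiv.swap_apply_left]

lemma pairN_row (d n : ℕ) (h : n < d) (i : Fin d) : ∑ j, pairN d n i j = n * pairN d n i i := by
  unfold pairN
  rw [Finset.sum_comm]
  simp_rw [← Finset.mul_sum, fInd_sum d n h, fInd_sq]
  rw [← Finset.sum_mul, mul_comm]

lemma pairN_off (d n : ℕ) (h : n < d) (i j : Fin d) (hij : i ≠ j) :
    ((d : ℝ) - 1) * pairN d n i j = ((n : ℝ) - 1) * pairN d n i i := by
  have h1 := pairN_row d n h i
  rw [← Finset.add_sum_erase _ _ (Finset.mem_univ i)] at h1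
  have h2 : ∀ k ∈ Finset.univ.erase i, pairN d n i k = pairN d n i j := by
    intro k hk
    have hk' : k ≠ i := Finset.ne_of_mem_erase hk
    have := pairN_inv d n (Equiv.swap j k) i j
    rwa [Equiv.swap_apply_left, Equiv.swap_apply_of_ne_of_ne hij hk'.symm] at this
  rw [Finset.sum_congr rfl h2, Finset.sum_const, Finset.card_erase_of_mem (Finset.mem_univ i),
    Finset.card_univ, Fintype.card_fin, nsmul_eq_mul, Nat.cast_sub (by omega)] at h1
  push_cast at h1
  linarith

lemma pairN_pos (d n : ℕ) (hn : 1 ≤ n) (h : n < d) (i : Fin d) : 0 < pairN d n i i := by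
  have h1 : ∀ σ : Equiv.Perm (Fin d), 0 ≤ fInd d n (σ i) * fInd d n (σ i) :=
    fun σ => mul_self_nonneg _
  refine Finset.sum_pos' (fun σ _ => h1 σ) ⟨Equiv.swap i ⟨0, by omega⟩, Finset.mem_univ _, ?_⟩
  have : 0 < n := hn
  simp [fInd, this]

noncomputable def wv (d n : ℕ) (c : ℝ) (a : Fin d → ℝ) (σ : Equiv.Perm (Fin d)) :
    Fin d × Fin d → ℂ :=
  ketDiag d (fun i => c * fInd d n (σ i) * a i)

lemma wv_rank (d n : ℕ) (h : n < d) (c : ℝ) (a : Fin d → ℝ) (σ : Equiv.Perm (Fin d)) :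
    (toMat d (wv d n c a σ)).rank ≤ n := by
  have : toMat d (wv d n c a σ) =
      Matrix.diagonal (fun i => ((c * fInd d n (σ i) * a i : ℝ) : ℂ)) := by
    ext i j
    simp [toMat, wv, ketDiag, Matrix.diagonal_apply]
  classical
  rw [this, Matrix.rank_diagonal, Fintype.card_subtype]
  calc _ ≤ (Finset.univ.filter (fun k : Fin d => (k : ℕ) < n)).card := by
        refine Finset.card_le_card_of_injOn σ ?_ σ.injective.injOn
        intro i hi
        simp only [Finset.coe_filter, Finset.mem_univ, true_and, Set.mem_setOf_eq] at hi ⊢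
        by_contra hc
        exact hi (by simp [fInd, hc])
    _ = n := card_lt d n h

/-- `Σ_i a_i² |ii⟩⟨ii| + ((n-1)/(d-n)) ψψᴴ` has Schmidt number at most `n`. -/
theorem filtered_K_schmidt_number (d n : ℕ) (hd : 2 ≤ d) (hn : 1 ≤ n) (hnd : n < d)
    (a : Fin d → ℝ) (ha : ∀ i, 0 ≤ a i) :
    SchmidtNumberLE d
      (Matrix.diagonal (fun p : Fin d × Fin d =>
          if p.1 = p.2 then ((a p.1 ^ 2 : ℝ) : ℂ) else 0) +
        (((n : ℝ) - 1) / ((d : ℝ) - (n : ℝ))) •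
          Matrix.vecMulVec (ketDiag d a) (star (ketDiag d a))) n := by
  classical
  let z : Fin d := ⟨0, by omega⟩
  have hN := pairN_pos d n hn hnd z
  set N := pairN d n z z with hNd
  have hdn : (0 : ℝ) < (d : ℝ) - n := by
    have : (n : ℝ) < d := by exact_mod_cast hnd
    linarith
  have hd1 : (0 : ℝ) < (d : ℝ) - 1 := by
    have : (2 : ℝ) ≤ d := by exact_mod_cast hd
    linarith
  let c : ℝ := Real.sqrt (((d : ℝ) - 1) / (((d : ℝ) - n) * N))
  have hc : c * c = ((d : ℝ) - 1) / (((d : ℝ) - n) * N) := Real.mul_self_sqrt (by positivity)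
  let e := Fintype.equivFin (Equiv.Perm (Fin d))
  refine ⟨Fintype.card (Equiv.Perm (Fin d)), fun k => wv d n c a (e.symm k),
    fun k => wv_rank d n hnd c a _, ?_⟩
  rw [Equiv.sum_comp e.symm (fun σ => Matrix.vecMulVec (wv d n c a σ) (star (wv d n c a σ)))]
  have key : ∀ i j : Fin d, (if i = j then a i ^ 2 else 0) +
      (((n : ℝ) - 1) / ((d : ℝ) - (n : ℝ))) * (a i * a j) =
      ∑ σ : Equiv.Perm (Fin d), (c * fInd d n (σ i) * a i) * (c * fInd d n (σ j) * a j) := by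
    intro i j
    have : ∑ σ : Equiv.Perm (Fin d), (c * fInd d n (σ i) * a i) * (c * fInd d n (σ j) * a j)
        = (c * c) * pairN d n i j * (a i * a j) := by
      unfold pairN
      rw [Finset.mul_sum, Finset.sum_mul]
      exact Finset.sum_congr rfl (fun σ _ => by ring)
    rw [this, hc]
    split_ifs with hij
    · subst hij
      rw [pairN_diag d n i z, ← hNd]
      field_simp
      ring
    · have h2 := pairN_off d n hnd i j hij
      rw [pairN_diag d n i z, ← hNd] at h2
      have h3 : pairN d n i j = ((n : ℝ) - 1) * N / ((d : ℝ) - 1) := by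
        rw [eq_div_iff hd1.ne']; linarith
      rw [h3]
      field_simp
      ring
  ext ⟨i, i'⟩ ⟨j, j'⟩
  rw [Matrix.sum_apply]
  by_cases hi : i = i'
  · by_cases hj : j = j'
    · subst hi hj
      have := congrArg (fun x : ℝ => (x : ℂ)) (key i j)
      simp only [Complex.ofReal_sum] at this
      simp only [Matrix.add_apply, Matrix.smul_apply, Matrix.diagonal_apply, Matrix.vecMulVec_apply,
        wv, ketDiag, Pi.star_apply, if_true, Prod.mk.injEq, and_self, Complex.real_smul,
        RCLike.star_def, Complex.conj_ofReal]
      simp only [Complex.ofReal_mul, Complex.ofReal_add, apply_ite Complex.ofReal,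
        Complex.ofReal_zero] at this ⊢
      exact this
    · subst hi
      have : ¬ (i = j ∧ i = j') := fun h => hj (h.1.symm.trans h.2)
      simp [Matrix.diagonal_apply, Matrix.vecMulVec_apply, wv, ketDiag, hj, this]
  · simp [Matrix.diagonal_apply, Matrix.vecMulVec_apply, wv, ketDiag, hi]
end

section
/- Let d ≥ 2 and 1 ≤ n ≤ d. Then the matrix P_+ + ((d−n)/n) · (𝟙 − Z)/(d² − d) on ℂ^d ⊗ ℂ^d has Schmidt number at most n. -/
open Matrix BigOperators Kronecker ComplexOrder

open scoped ComplexConjugate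

lemma aux_schmidt {ι : Type*} [Fintype ι] (d n : ℕ) (w : ι → (Fin d × Fin d → ℂ))
    (h : ∀ i, (toMat d (w i)).rank ≤ n) (ρ : Matrix (Fin d × Fin d) (Fin d × Fin d) ℂ)
    (hρ : ρ = ∑ i, Matrix.vecMulVec (w i) (star (w i))) : SchmidtNumberLE d ρ n := by
  refine ⟨Fintype.card ι, fun i => w ((Fintype.equivFin ι).symm i), fun i => h _, ?_⟩
  rw [hρ]
  exact (Equiv.sum_comp (Fintype.equivFin ι).symm
    (fun i => Matrix.vecMulVec (w i) (star (w i)))).symm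

lemma aux_T {d : ℕ} (u : Fin d → ℂ) (h1 : ∀ k, u k * conj (u k) = 1) (h0 : ∑ k, u k = 0)
    (a b : Fin d) (hab : a ≠ b) :
    ((d : ℂ) - 1) * ∑ σ : Equiv.Perm (Fin d), u (σ a) * conj (u (σ b)) = - (d.factorial : ℂ) := by
  have hs : ∀ c, c ≠ a → ∑ σ : Equiv.Perm (Fin d), u (σ a) * conj (u (σ c)) =
      ∑ σ : Equiv.Perm (Fin d), u (σ a) * conj (u (σ b)) := by
    intro c hc
    rw [← Equiv.sum_comp (Equiv.mulRight (Equiv.swap b c))]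
    refine Finset.sum_congr rfl fun σ _ => ?_
    simp [Equiv.swap_apply_of_ne_of_ne hab hc.symm]
  have htot : ∑ c, ∑ σ : Equiv.Perm (Fin d), u (σ a) * conj (u (σ c)) = 0 := by
    rw [Finset.sum_comm]
    refine Finset.sum_eq_zero fun σ _ => ?_
    rw [← Finset.mul_sum, Equiv.sum_comp σ (fun c => conj (u c)), ← map_sum, h0]
    simp
  rw [← Finset.add_sum_erase _ _ (Finset.mem_univ a),
    Finset.sum_congr rfl (fun c hc => hs c (Finset.ne_of_mem_erase hc))] at htot
  simp only [h1, Finset.sum_const, Finset.card_univ, Fintype.card_perm, Fintype.card_fin,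
    nsmul_eq_mul, mul_one, Finset.card_erase_of_mem (Finset.mem_univ a)] at htot
  have : ((d - 1 : ℕ) : ℂ) = (d : ℂ) - 1 := by
    rw [Nat.cast_sub (by have := a.2; omega)]; simp
  rw [this] at htot
  linear_combination htot

lemma aux_G {d n : ℕ} (hnd : n ≤ d) (u : Fin d → ℂ) (h1 : ∀ k, u k * conj (u k) = 1)
    (h0 : ∑ k, u k = 0) :
    ((d : ℂ) - 1) * ∑ σ : Equiv.Perm (Fin d), (∑ a : Fin n, u (σ (Fin.castLE hnd a))) *
      conj (∑ a : Fin n, u (σ (Fin.castLE hnd a))) = d.factorial * n * (d - n) := by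
  have e : ∀ a b : Fin n, ((d : ℂ) - 1) * ∑ σ : Equiv.Perm (Fin d),
      u (σ (Fin.castLE hnd a)) * conj (u (σ (Fin.castLE hnd b))) =
      (if a = b then (d : ℂ) * d.factorial else 0) - d.factorial := by
    intro a b
    split_ifs with h
    · subst h
      simp only [h1, Finset.sum_const, Finset.card_univ, Fintype.card_perm, Fintype.card_fin,
        nsmul_eq_mul, mul_one]
      ring
    · rw [aux_T u h1 h0 _ _ (by simpa using h)]; ring
  simp only [map_sum, Finset.sum_mul_sum]
  rw [Finset.sum_comm]
  simp_rw [Finset.sum_comm (s := (Finset.univ : Finset (Equiv.Perm (Fin d)))), Finset.mul_sum]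
  simp_rw [← Finset.mul_sum, Finset.mul_sum (s := (Finset.univ : Finset (Fin n))), e]
  simp
  ring

lemma aux_Z {d : ℕ} (χ : AddChar (ZMod 3) ℂ) (hχ : ∀ x, x ≠ 0 → χ x ≠ 1) (i j k l : Fin d) :
    ∑ z : Fin d → ZMod 3, χ (z i - z j - z k + z l) =
      if (i = j ∧ k = l) ∨ (i = k ∧ j = l) then (3 : ℂ) ^ d else 0 := by
  split_ifs with h
  · have : ∀ z : Fin d → ZMod 3, z i - z j - z k + z l = 0 := by
      rcases h with ⟨rfl, rfl⟩ | ⟨rfl, rfl⟩ <;> intro z <;> ring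
    simp [this, ZMod.card]
  · obtain ⟨m, hm⟩ : ∃ m, ((Pi.single m 1 : Fin d → ZMod 3) i - (Pi.single m 1 : Fin d → ZMod 3) j
      - (Pi.single m 1 : Fin d → ZMod 3) k + (Pi.single m 1 : Fin d → ZMod 3) l) ≠ 0 := by
      by_contra hc
      push Not at hc
      have c1 := hc i
      have c2 := hc l
      simp only [Pi.single_apply] at c1 c2
      have e1 : (1 : ZMod 3) ≠ 0 := by decide
      have e2 : (1 + 1 : ZMod 3) ≠ 0 := by decide
      have e3 : (1 - 1 - 1 + 0 : ZMod 3) ≠ 0 := by decide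
      have e4 : (1 + 1 - 1: ZMod 3) ≠ 0 := by decide
      grind
    set S := ∑ z : Fin d → ZMod 3, χ (z i - z j - z k + z l) with hS
    have : S = χ ((Pi.single m 1 : Fin d → ZMod 3) i - (Pi.single m 1 : Fin d → ZMod 3) j
      - (Pi.single m 1 : Fin d → ZMod 3) k + (Pi.single m 1 : Fin d → ZMod 3) l) * S := by
      conv_lhs => rw [hS, ← Equiv.sum_comp (Equiv.addLeft (Pi.single m 1 : Fin d → ZMod 3))]
      rw [hS, Finset.mul_sum]
      refine Finset.sum_congr rfl fun z _ => ?_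
      rw [← AddChar.map_add_eq_mul]
      congr 1
      simp only [Equiv.coe_addLeft, Pi.add_apply]
      ring
    have h2 := hχ _ hm
    have h3 := sub_ne_zero.mpr h2
    have h4 := mul_eq_zero.mp (show (_ - 1) * S = 0 from by rw [sub_mul, ← this]; ring)
    exact h4.resolve_left h3

lemma aux_F (d : ℕ) (hd : 2 ≤ d) : ∃ F : Fin d → Fin d → ℂ, (∀ k i, F k i * conj (F k i) = 1) ∧
    ∀ i j, i ≠ j → ∑ k, F k i * conj (F k j) = 0 := by
  obtain ⟨d, rfl⟩ : ∃ e, d = e + 1 := ⟨d - 1, by omega⟩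
  have hc : ∀ x : ZMod (d+1), conj (ZMod.stdAddChar x : ℂ) = ZMod.stdAddChar (-x) := by
    intro x
    rw [AddChar.map_neg_eq_conj]
  let e : Fin (d + 1) ≃ ZMod (d + 1) := Equiv.refl _
  refine ⟨fun k i => ZMod.stdAddChar (e k * e i), ?_, ?_⟩
  · intro k i
    rw [hc, ← AddChar.map_add_eq_mul]; simp
  · intro i j hij
    have h := AddChar.sum_mulShift (ψ := (ZMod.stdAddChar (N := d + 1))) (e i - e j)
      (ZMod.isPrimitive_stdAddChar _)
    rw [if_neg (sub_ne_zero.mpr (e.injective.ne hij)), Nat.cast_zero, ← Equiv.sum_comp e] at h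
    simp only [hc, ← AddChar.map_add_eq_mul]
    rw [← h]
    refine Finset.sum_congr rfl fun k _ => ?_
    congr 1
    ring

/-- `P₊ + ((d-n)/n) · (𝟙 - Z)/(d² - d)` has Schmidt number at most `n`. -/
theorem mes_plus_ball_schmidt_number (d n : ℕ) (hd : 2 ≤ d) (hn : 1 ≤ n) (hnd : n ≤ d) :
    SchmidtNumberLE d
      (Pplus d + ((((d : ℝ) - n) / n) / ((d : ℝ) ^ 2 - d)) •
        ((1 : Matrix (Fin d × Fin d) (Fin d × Fin d) ℂ) - Zmat d)) n := by
  obtain ⟨F, hF1, hF0⟩ := aux_F d hd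
  have hcc : ∀ x : ZMod 3, conj (ZMod.stdAddChar x : ℂ) = ZMod.stdAddChar (-x) := by
    intro x
    rw [AddChar.map_neg_eq_conj]
  have hχ : ∀ x : ZMod 3, x ≠ 0 → (ZMod.stdAddChar x : ℂ) ≠ 1 := by
    intro x hx h
    exact hx (ZMod.injective_stdAddChar (h.trans (AddChar.map_zero_eq_one _).symm))
  set c : ℝ := 1 / (3 ^ d * d.factorial * n ^ 2 * d) with hcdef
  have hc0 : 0 ≤ c := by positivity
  have hα : ((Real.sqrt c : ℝ) : ℂ) * ((Real.sqrt c : ℝ) : ℂ) = (c : ℂ) := by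
    rw [← Complex.ofReal_mul, Real.mul_self_sqrt hc0]
  let G : Equiv.Perm (Fin d) → Fin d → Fin d → ℂ := fun σ i j =>
    ∑ a : Fin n, F (σ (Fin.castLE hnd a)) i * conj (F (σ (Fin.castLE hnd a)) j)
  let w : (Fin d → ZMod 3) × Equiv.Perm (Fin d) → (Fin d × Fin d → ℂ) := fun x p =>
    ((Real.sqrt c : ℝ) : ℂ) * ZMod.stdAddChar (x.1 p.1 - x.1 p.2) * G x.2 p.1 p.2
  refine aux_schmidt (ι := (Fin d → ZMod 3) × Equiv.Perm (Fin d)) d n w ?_ _ ?_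
  · rintro ⟨z, σ⟩
    have : toMat d (w (z, σ)) =
        (Matrix.of fun (i : Fin d) (a : Fin n) => ((Real.sqrt c : ℝ) : ℂ) *
          ZMod.stdAddChar (z i) * F (σ (Fin.castLE hnd a)) i) *
        (Matrix.of fun (a : Fin n) (j : Fin d) =>
          ZMod.stdAddChar (- z j) * conj (F (σ (Fin.castLE hnd a)) j)) := by
      ext i j
      simp only [toMat, Matrix.of_apply, Matrix.mul_apply, w, G, Finset.mul_sum, sub_eq_add_neg,
        AddChar.map_add_eq_mul]
      refine Finset.sum_congr rfl fun a _ => ?_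
      ring
    rw [this]
    refine (Matrix.rank_mul_le_left _ _).trans ?_
    simpa using Matrix.rank_le_card_width (Matrix.of fun (i : Fin d) (a : Fin n) =>
      ((Real.sqrt c : ℝ) : ℂ) * ZMod.stdAddChar (z i) * F (σ (Fin.castLE hnd a)) i)
  · have hd0 : (d : ℂ) ≠ 0 := by exact_mod_cast (by omega : d ≠ 0)
    have hn0 : (n : ℂ) ≠ 0 := by exact_mod_cast (by omega : n ≠ 0)
    have hf0 : (d.factorial : ℂ) ≠ 0 := by exact_mod_cast d.factorial_ne_zero
    have hd1 : (d : ℂ) - 1 ≠ 0 := by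
      rw [sub_ne_zero]; exact_mod_cast (by omega : d ≠ 1)
    have hcC : (c : ℂ) = 1 / (3 ^ d * d.factorial * n ^ 2 * d) := by
      rw [hcdef]; push_cast; rfl
    have key : ∀ i j k l, (∑ x, Matrix.vecMulVec (w x) (star (w x))) (i, j) (k, l) =
        c * (if (i = j ∧ k = l) ∨ (i = k ∧ j = l) then (3 : ℂ) ^ d else 0) *
        ∑ σ, G σ i j * conj (G σ k l) := by
      intro i j k l
      rw [← aux_Z ZMod.stdAddChar hχ, Matrix.sum_apply, Fintype.sum_prod_type, mul_assoc,
        Finset.sum_mul_sum, Finset.mul_sum]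
      refine Finset.sum_congr rfl fun z _ => ?_
      rw [Finset.mul_sum]
      refine Finset.sum_congr rfl fun σ _ => ?_
      simp only [Matrix.vecMulVec_apply, Pi.star_apply, w, RCLike.star_def, map_mul, hcc,
        Complex.conj_ofReal]
      rw [← hα, show z i - z j - z k + z l = (z i - z j) + -(z k - z l) by ring,
        AddChar.map_add_eq_mul]
      ring
    have hGd : ∀ σ i, G σ i i = n := by
      intro σ i
      simp [G, hF1]
    have hs : (((Real.sqrt d)⁻¹ : ℝ) : ℂ) * (((Real.sqrt d)⁻¹ : ℝ) : ℂ) = 1 / d := by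
      rw [← Complex.ofReal_mul, ← mul_inv, Real.mul_self_sqrt (by positivity)]
      push_cast; simp
    ext ⟨i, j⟩ ⟨k, l⟩
    rw [key]
    simp only [Matrix.add_apply, Matrix.smul_apply, Matrix.sub_apply, Pplus, Zmat,
      Matrix.vecMulVec_apply, Pi.star_apply, psiPlus, Matrix.one_apply, Matrix.diagonal_apply,
      Prod.mk.injEq]
    by_cases h1 : i = j ∧ k = l
    · obtain ⟨rfl, rfl⟩ := h1
      simp only [hGd, RCLike.star_def, if_true, Complex.conj_ofReal, hs]
      simp [hcC, Fintype.card_perm]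
      field_simp
    · by_cases h2 : i = k ∧ j = l
      · obtain ⟨rfl, rfl⟩ := h2
        have hij : i ≠ j := fun h => h1 ⟨h, h⟩
        have := aux_G hnd (fun k => F k i * conj (F k j)) (fun k => by
          have a := hF1 k i
          have b := hF1 k j
          simp only [map_mul, Complex.conj_conj]
          linear_combination a * (F k j * conj (F k j)) + b) (hF0 i j hij)
        have e : ∑ σ, G σ i j * conj (G σ i j) = d.factorial * n * (d - n) / (d - 1) := by
          rw [eq_div_iff hd1, mul_comm]; exact this
        rw [e, hcC]
        have hd2 : (d : ℂ) ^ 2 - d ≠ 0 := by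
          rw [show (d : ℂ) ^ 2 - d = d * (d - 1) by ring]; exact mul_ne_zero hd0 hd1
        simp [hij]
        rw [show (d : ℂ) ^ 2 - d = d * (d - 1) by ring]
        field_simp
      · have h3 : ¬ ((i = j ∧ k = l) ∨ (i = k ∧ j = l)) := not_or.mpr ⟨h1, h2⟩
        simp only [if_neg h3, if_neg h2]
        by_cases hij : i = j
        · have : k ≠ l := fun h => h1 ⟨hij, h⟩
          simp [this]
        · simp [hij]
end

section
/- Let d ≥ 2 and 1 ≤ n < d. Let σ be a positive semidefinite matrix on ℂ^d ⊗ ℂ^d with Tr σ = 1 and let t ≥ 0. If P_+ + t·σ has Schmidt number at most n, then t ≥ (d−n)/n. -/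
open Matrix BigOperators Kronecker ComplexOrder

lemma aux_cs_s9 {d : ℕ} (K : Submodule ℂ (EuclideanSpace ℂ (Fin d)))
    (c : Fin d → EuclideanSpace ℂ (Fin d)) (hc : ∀ i, c i ∈ K) :
    ‖∑ i, c i i‖ ^ 2 ≤ (Module.finrank ℂ K : ℝ) * ∑ i, ‖c i‖ ^ 2 := by
  let b := stdOrthonormalBasis ℂ K
  have h1 : ∀ i, c i i = ∑ k, inner ℂ (b k) (⟨c i, hc i⟩ : K) * (b k : EuclideanSpace ℂ (Fin d)) i := by
    intro i
    have := b.sum_repr' (⟨c i, hc i⟩ : K)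
    have h2 := congrArg (fun x : K => (x : EuclideanSpace ℂ (Fin d)) i) this
    simp only [Submodule.coe_sum, Submodule.coe_smul] at h2
    rw [← h2]
    simp
  have h2 : ∀ i, ‖c i‖ ^ 2 = ∑ k, ‖inner ℂ (b k) (⟨c i, hc i⟩ : K)‖ ^ 2 := by
    intro i
    rw [b.sum_sq_norm_inner_right]
    rfl
  have h3 : ∀ k, ∑ i, ‖(b k : EuclideanSpace ℂ (Fin d)) i‖ ^ 2 = 1 := by
    intro k
    rw [← EuclideanSpace.norm_sq_eq]
    have : ‖(b k : EuclideanSpace ℂ (Fin d))‖ = 1 := b.norm_eq_one k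
    rw [this]; norm_num
  have h4 : (Module.finrank ℂ K : ℝ) = ∑ i, ∑ k, ‖(b k : EuclideanSpace ℂ (Fin d)) i‖ ^ 2 := by
    rw [Finset.sum_comm]
    simp [h3]
  simp_rw [h1, h2]
  rw [h4, ← Fintype.sum_prod_type', ← Fintype.sum_prod_type', ← Fintype.sum_prod_type']
  refine le_trans (pow_le_pow_left₀ (norm_nonneg _) (norm_sum_le _ _) 2) ?_
  simp_rw [norm_mul]
  rw [mul_comm]
  exact Finset.sum_mul_sq_le_sq_mul_sq _ _ _

lemma aux_rank {d : ℕ} (M : Matrix (Fin d) (Fin d) ℂ) :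
    ‖M.trace‖ ^ 2 ≤ (M.rank : ℝ) * ∑ j, ∑ i, ‖M i j‖ ^ 2 := by
  let B := (EuclideanSpace.basisFun (Fin d) ℂ).toBasis
  have h := aux_cs_s9 (LinearMap.range (Matrix.toLin B B M)) (fun j => WithLp.toLp 2 (fun i => M i j)) (by
    intro j
    refine ⟨B j, ?_⟩
    rw [Matrix.toLin_self]
    ext i
    simp [B, Pi.single_apply])
  rw [← Matrix.rank_eq_finrank_range_toLin] at h
  simp_rw [EuclideanSpace.norm_sq_eq] at h
  exact h

lemma aux_q {d : ℕ} (w : Fin d × Fin d → ℂ) :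
    star (psiPlus d) ⬝ᵥ w = (((Real.sqrt d)⁻¹ : ℝ) : ℂ) * (toMat d w).trace := by
  simp only [dotProduct, psiPlus, Pi.star_apply, Fintype.sum_prod_type, Matrix.trace, toMat,
    Finset.mul_sum, Matrix.diag, Matrix.of_apply]
  refine Finset.sum_congr rfl fun i _ => ?_
  rw [Finset.sum_eq_single i]
  · simp
  · intro j _ hj
    simp [hj.symm]
  · simp

lemma aux_vec {ι : Type*} [Fintype ι] (p w : ι → ℂ) :
    star p ⬝ᵥ (vecMulVec w (star w) *ᵥ p) = ((‖star p ⬝ᵥ w‖ ^ 2 : ℝ) : ℂ) := by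
  rw [Matrix.vecMulVec_mulVec, dotProduct_smul]
  have : star w ⬝ᵥ p = star (star p ⬝ᵥ w) := by
    rw [Matrix.star_dotProduct]
  rw [this]
  simp only [MulOpposite.smul_eq_mul_unop, MulOpposite.unop_op]
  rw [Complex.star_def, Complex.mul_conj, Complex.normSq_eq_norm_sq]

lemma aux_tr {ι : Type*} [Fintype ι] (w : ι → ℂ) :
    (vecMulVec w (star w)).trace = ((∑ p, ‖w p‖ ^ 2 : ℝ) : ℂ) := by
  simp [Matrix.trace, vecMulVec_apply, Complex.mul_conj, Complex.normSq_eq_norm_sq]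

/-- Lower bound: if `P₊ + t σ` has Schmidt number at most `n` then `t ≥ (d-n)/n`. -/
theorem lower_bound_gsr_mes (d n : ℕ) (hd : 2 ≤ d) (hn : 1 ≤ n) (hnd : n < d)
    (σ : Matrix (Fin d × Fin d) (Fin d × Fin d) ℂ) (hσ : σ.PosSemidef)
    (htr : σ.trace = 1) (t : ℝ) (ht : 0 ≤ t)
    (h : SchmidtNumberLE d (Pplus d + t • σ) n) :
    ((d : ℝ) - n) / n ≤ t := by
  obtain ⟨k, w, hw, hρ⟩ := h
  have hd0 : (0:ℝ) < d := by positivity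
  have hn0 : (0:ℝ) < n := by exact_mod_cast hn
  have hs : ((Real.sqrt d)⁻¹) ^ 2 = (d:ℝ)⁻¹ := by
    rw [inv_pow, Real.sq_sqrt hd0.le]
  have hpn : ∑ p, ‖psiPlus d p‖ ^ 2 = 1 := by
    rw [Fintype.sum_prod_type]
    have : ∀ i : Fin d, ∑ j, ‖psiPlus d (i, j)‖ ^ 2 = (d:ℝ)⁻¹ := by
      intro i
      rw [Finset.sum_eq_single i]
      · simp only [psiPlus, if_true]
        rw [Complex.norm_real, Real.norm_eq_abs, sq_abs, hs]
      · intro j _ hj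
        simp [psiPlus, hj.symm]
      · simp
    simp [this, hd0.ne']
  have hpp : star (psiPlus d) ⬝ᵥ psiPlus d = 1 := by
    have : star (psiPlus d) ⬝ᵥ psiPlus d = ((∑ p, ‖psiPlus d p‖ ^ 2 : ℝ) : ℂ) := by
      simp [dotProduct, Complex.conj_mul']
    rw [this, hpn]; simp
  have htrace : (1 + t : ℝ) = ∑ i, ∑ p, ‖w i p‖ ^ 2 := by
    have := congrArg Matrix.trace hρ
    rw [Matrix.trace_add, Matrix.trace_smul, htr, Matrix.trace_sum, Pplus, aux_tr, hpn] at this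
    simp_rw [aux_tr] at this
    rw [← Complex.ofReal_sum] at this
    have h2 := congrArg Complex.re this
    rw [Complex.ofReal_re] at h2
    rw [← h2]; simp
  have hquad : (1 : ℝ) ≤ ∑ i, ‖star (psiPlus d) ⬝ᵥ w i‖ ^ 2 := by
    have := congrArg (fun A => star (psiPlus d) ⬝ᵥ (A *ᵥ psiPlus d)) hρ
    simp only [Matrix.add_mulVec, dotProduct_add, Matrix.smul_mulVec, dotProduct_smul,
      Matrix.sum_mulVec, dotProduct_sum, aux_vec, Pplus] at this
    rw [hpp, ← Complex.ofReal_sum] at this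
    have h2 := congrArg Complex.re this
    rw [Complex.ofReal_re] at h2
    rw [← h2]
    have h3 := (Complex.le_def.1 (hσ.dotProduct_mulVec_nonneg (psiPlus d))).1
    have h4 := mul_nonneg ht h3
    simpa using h4
  have hi : ∀ i, ‖star (psiPlus d) ⬝ᵥ w i‖ ^ 2 ≤ (d:ℝ)⁻¹ * (n * ∑ p, ‖w i p‖ ^ 2) := by
    intro i
    rw [aux_q, norm_mul, mul_pow, Complex.norm_real, Real.norm_eq_abs, sq_abs, hs]
    refine mul_le_mul_of_nonneg_left ?_ (by positivity)
    refine (aux_rank _).trans ?_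
    rw [Fintype.sum_prod_type, Finset.sum_comm]
    refine mul_le_mul_of_nonneg_right (by exact_mod_cast hw i) ?_
    positivity
  have hfin : (1:ℝ) ≤ (d:ℝ)⁻¹ * (n * (1 + t)) := by
    rw [htrace, Finset.mul_sum, Finset.mul_sum]
    exact hquad.trans (Finset.sum_le_sum fun i _ => hi i)
  rw [inv_mul_eq_div, le_div_iff₀ hd0] at hfin
  rw [div_le_iff₀ hn0]
  linarith
end

section
/- Lower bound for the generalised Schmidt robustness of a pure state: let d ≥ 2, 1 ≤ n < d, and let ψ = Σ_i a_i |ii⟩ be a unit vector with a_i ≥ 0 and Σ_i a_i² = 1. Let σ be any positive semidefinite matrix on ℂ^d ⊗ ℂ^d with Tr σ = 1 and let t ≥ 0. If ψψ† + t·σ has Schmidt number at most n, then t ≥ (1/n)(Σ_i a_i)² − 1. -/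
open Matrix BigOperators Kronecker ComplexOrder

theorem trace_sq_le_rank {d : ℕ} (M : Matrix (Fin d) (Fin d) ℂ) :
    ‖M.trace‖ ^ 2 ≤ M.rank * ∑ j, ∑ i, ‖M i j‖ ^ 2 := by
  classical
  let c : Fin d → EuclideanSpace ℂ (Fin d) := fun j => WithLp.toLp 2 (M.col j)
  let S : Submodule ℂ (EuclideanSpace ℂ (Fin d)) := Submodule.span ℂ (Set.range c)
  have hS : Module.finrank ℂ S = M.rank := by
    rw [Matrix.rank_eq_finrank_span_cols]
    have : S = (Submodule.span ℂ (Set.range M.col)).map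
        ((WithLp.linearEquiv 2 ℂ (Fin d → ℂ)).symm : (Fin d → ℂ) →ₗ[ℂ] _) := by
      rw [Submodule.map_span, ← Set.range_comp]
      rfl
    rw [this]
    exact LinearEquiv.finrank_map_eq (WithLp.linearEquiv 2 ℂ (Fin d → ℂ)).symm _
  let b := stdOrthonormalBasis ℂ S
  have hc : ∀ j, c j ∈ S := fun j => Submodule.subset_span ⟨j, rfl⟩
  let c' : Fin d → S := fun j => ⟨c j, hc j⟩
  have hexp : ∀ j, M j j = ∑ l, inner ℂ (b l) (c' j) * (b l : EuclideanSpace ℂ (Fin d)) j := by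
    intro j
    have h1 : ((∑ l, inner ℂ (b l) (c' j) • b l : S) : EuclideanSpace ℂ (Fin d)) j = c j j := by
      rw [b.sum_repr' (c' j)]
    have h2 : c j j = M j j := rfl
    rw [← h2, ← h1]
    simp
  have hn1 : ∀ j, ∑ l, ‖inner ℂ (b l) (c' j)‖ ^ 2 = ∑ i, ‖M i j‖ ^ 2 := by
    intro j
    rw [b.sum_sq_norm_inner_right]
    have : ‖c' j‖ = ‖c j‖ := rfl
    rw [this, EuclideanSpace.norm_sq_eq]
    rfl
  have hn2 : ∀ l, ∑ j, ‖(b l : EuclideanSpace ℂ (Fin d)) j‖ ^ 2 = 1 := by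
    intro l
    rw [← EuclideanSpace.norm_sq_eq]
    have : ‖(b l : EuclideanSpace ℂ (Fin d))‖ = 1 := b.orthonormal.1 l
    rw [this]; norm_num
  have htr : M.trace = ∑ p : Fin d × Fin (Module.finrank ℂ S),
      inner ℂ (b p.2) (c' p.1) * (b p.2 : EuclideanSpace ℂ (Fin d)) p.1 := by
    rw [Fintype.sum_prod_type]
    exact Finset.sum_congr rfl fun j _ => hexp j
  have hle : ‖M.trace‖ ≤ ∑ p : Fin d × Fin (Module.finrank ℂ S),
      ‖inner ℂ (b p.2) (c' p.1)‖ * ‖(b p.2 : EuclideanSpace ℂ (Fin d)) p.1‖ := by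
    rw [htr]
    refine (norm_sum_le _ _).trans (le_of_eq ?_)
    simp only [norm_mul]
  calc ‖M.trace‖ ^ 2 ≤ _ := pow_le_pow_left₀ (norm_nonneg _) hle 2
    _ ≤ _ := Finset.sum_mul_sq_le_sq_mul_sq _ _ _
    _ = _ := by
      rw [Fintype.sum_prod_type, Fintype.sum_prod_type_right]
      simp only [hn1, hn2]
      simp [hS, mul_comm]

/-- Lower bound for the generalised Schmidt robustness of a pure state. -/
theorem lower_bound_generalised_schmidt_robustness (d n : ℕ) (hd : 2 ≤ d) (hn : 1 ≤ n)
    (hnd : n < d) (a : Fin d → ℝ) (ha : ∀ i, 0 ≤ a i) (hnorm : ∑ i, a i ^ 2 = 1)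
    (σ : Matrix (Fin d × Fin d) (Fin d × Fin d) ℂ) (hσ : σ.PosSemidef) (htr : σ.trace = 1)
    (t : ℝ) (ht : 0 ≤ t)
    (h : SchmidtNumberLE d
      (Matrix.vecMulVec (ketDiag d a) (star (ketDiag d a)) + t • σ) n) :
    (1 / (n : ℝ)) * (∑ i, a i) ^ 2 - 1 ≤ t := by
  obtain ⟨k, w, hw, hρ⟩ := h
  let φ : Fin d × Fin d → ℂ := fun p => if p.1 = p.2 then 1 else 0
  have hφs : star φ = φ := by
    ext p; by_cases hp : p.1 = p.2 <;> simp [φ, hp]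
  have hq : ∀ v : Fin d × Fin d → ℂ,
      (star φ ⬝ᵥ (Matrix.vecMulVec v (star v) *ᵥ φ)) = ((‖(toMat d v).trace‖ ^ 2 : ℝ) : ℂ) := by
    intro v
    have h1 : φ ⬝ᵥ v = (toMat d v).trace := by
      simp [φ, dotProduct, Fintype.sum_prod_type, Matrix.trace, toMat]
    have h2 : star v ⬝ᵥ φ = star (toMat d v).trace := by
      rw [← h1, Matrix.star_dotProduct, hφs, dotProduct_comm]
    rw [Matrix.vecMulVec_mulVec, hφs]
    simp only [op_smul_eq_smul, dotProduct_smul, h1, h2, smul_eq_mul]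
    rw [Complex.ofReal_pow, ← Complex.conj_mul']
    rfl
  have htv : ∀ v : Fin d × Fin d → ℂ,
      (Matrix.vecMulVec v (star v)).trace = ((∑ j, ∑ i, ‖toMat d v i j‖ ^ 2 : ℝ) : ℂ) := by
    intro v
    rw [Finset.sum_comm, Matrix.trace, Fintype.sum_prod_type]
    push_cast
    refine Finset.sum_congr rfl fun i _ => Finset.sum_congr rfl fun j _ => ?_
    rw [← Complex.mul_conj']
    rfl
  have htrρ := congrArg Matrix.trace hρ
  rw [Matrix.trace_add, Matrix.trace_smul, htr, Matrix.trace_sum, htv] at htrρ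
  simp only [htv] at htrρ
  have hψ : (∑ j, ∑ i, ‖toMat d (ketDiag d a) i j‖ ^ 2 : ℝ) = 1 := by
    rw [← hnorm]
    refine Finset.sum_congr rfl fun j _ => ?_
    rw [Finset.sum_eq_single j]
    · simp [toMat, ketDiag]
    · intro i _ hij; simp [toMat, ketDiag, hij]
    · simp
  rw [hψ] at htrρ
  have htrR : 1 + t = ∑ l, ∑ j, ∑ i, ‖toMat d (w l) i j‖ ^ 2 := by
    have : ((1 + t : ℝ) : ℂ) = ((∑ l, ∑ j, ∑ i, ‖toMat d (w l) i j‖ ^ 2 : ℝ) : ℂ) := by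
      rw [Complex.ofReal_sum, ← htrρ]; simp
    exact_mod_cast this
  have hqρ := congrArg (fun X => (star φ ⬝ᵥ (X *ᵥ φ)).re) hρ
  simp only [Matrix.add_mulVec, Matrix.smul_mulVec, Matrix.sum_mulVec, dotProduct_add,
    dotProduct_smul, dotProduct_sum, hq, Complex.add_re, Complex.re_sum, Complex.ofReal_re,
    Complex.smul_re] at hqρ
  have hσ0 : 0 ≤ (star φ ⬝ᵥ (σ *ᵥ φ)).re := (Complex.le_def.1 (hσ.dotProduct_mulVec_nonneg φ)).1
  have htrψ : ‖(toMat d (ketDiag d a)).trace‖ ^ 2 = (∑ i, a i) ^ 2 := by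
    have : (toMat d (ketDiag d a)).trace = ((∑ i, a i : ℝ) : ℂ) := by
      simp [Matrix.trace, toMat, ketDiag]
    rw [this, Complex.norm_real, Real.norm_eq_abs, sq_abs]
  have hub : ∑ l, ‖(toMat d (w l)).trace‖ ^ 2 ≤ n * (1 + t) := by
    rw [htrR, Finset.mul_sum]
    refine Finset.sum_le_sum fun l _ => (trace_sq_le_rank _).trans ?_
    have : ((toMat d (w l)).rank : ℝ) ≤ n := by exact_mod_cast hw l
    gcongr
  rw [htrψ] at hqρ
  have hn0 : (0 : ℝ) < n := by exact_mod_cast hn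
  have hfin : (∑ i, a i) ^ 2 ≤ n * (1 + t) := by
    have := mul_nonneg ht hσ0
    simp only [smul_eq_mul] at hqρ
    linarith
  have : (1 / (n : ℝ)) * (∑ i, a i) ^ 2 ≤ 1 + t := by
    rw [one_div, inv_mul_le_iff₀ hn0]; exact hfin
  linarith
end

section
/- Weak upper bound on the random Schmidt robustness: let d ≥ 2, 1 ≤ n < d, and let ψ = Σ_i a_i |ii⟩ be a unit vector with a_i ≥ 0 and Σ_i a_i² = 1. Then the matrix ψψ† + ((d−n)/(nd−1)) · 𝟙 on ℂ^d ⊗ ℂ^d has Schmidt number at most n. -/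
open Matrix BigOperators Kronecker ComplexOrder

namespace SNProof

lemma of_fintype {d n : ℕ} {ι : Type*} [Fintype ι] (w : ι → (Fin d × Fin d → ℂ))
    (hw : ∀ i, (toMat d (w i)).rank ≤ n) :
    SchmidtNumberLE d (∑ i, Matrix.vecMulVec (w i) (star (w i))) n := by
  refine ⟨Fintype.card ι, fun k => w ((Fintype.equivFin ι).symm k), fun k => hw _, ?_⟩
  exact (Equiv.sum_comp (Fintype.equivFin ι).symm
    (fun i => Matrix.vecMulVec (w i) (star (w i)))).symm

lemma add {d n : ℕ} {ρ τ : Matrix (Fin d × Fin d) (Fin d × Fin d) ℂ}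
    (h1 : SchmidtNumberLE d ρ n) (h2 : SchmidtNumberLE d τ n) :
    SchmidtNumberLE d (ρ + τ) n := by
  obtain ⟨k, w, hw, rfl⟩ := h1
  obtain ⟨l, v, hv, rfl⟩ := h2
  have := of_fintype (n := n) (Sum.elim w v) (by rintro (i | i) <;> simp [hw, hv])
  simpa [Fintype.sum_sum_type] using this

/-- local operation -/
lemma localop {d n : ℕ} {ρ : Matrix (Fin d × Fin d) (Fin d × Fin d) ℂ}
    (h1 : SchmidtNumberLE d ρ n) (a : Fin d → ℂ) :
    SchmidtNumberLE d (Matrix.of fun p q => a p.1 * ρ p q * star (a q.1)) n := by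
  obtain ⟨k, w, hw, rfl⟩ := h1
  have := of_fintype (n := n) (fun i (p : Fin d × Fin d) => a p.1 * w i p) (by
    intro i
    have : toMat d (fun p => a p.1 * w i p) = Matrix.diagonal a * toMat d (w i) := by
      ext x y; simp [toMat]
    rw [this]
    exact (Matrix.rank_mul_le_right _ _).trans (hw i))
  convert this using 1
  ext p q
  simp only [Matrix.of_apply, Matrix.sum_apply, Matrix.vecMulVec_apply, Pi.star_apply,
    Finset.mul_sum, Finset.sum_mul, star_mul']
  refine Finset.sum_congr rfl fun i _ => by ring

lemma smul {d n : ℕ} {ρ : Matrix (Fin d × Fin d) (Fin d × Fin d) ℂ}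
    (h1 : SchmidtNumberLE d ρ n) (c : ℝ) (hc : 0 ≤ c) :
    SchmidtNumberLE d ((c : ℂ) • ρ) n := by
  convert localop h1 (fun _ => ((Real.sqrt c : ℝ) : ℂ)) using 1
  ext p q
  have : (c : ℂ) = (Real.sqrt c : ℂ) * (Real.sqrt c : ℂ) := by
    rw [← Complex.ofReal_mul, Real.mul_self_sqrt hc]
  simp only [Matrix.smul_apply, Matrix.of_apply, smul_eq_mul, Complex.star_def, Complex.conj_ofReal]
  rw [this]; ring

lemma diag {d n : ℕ} (hn : 1 ≤ n) (b : Fin d × Fin d → ℝ) (hb : ∀ p, 0 ≤ b p) :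
    SchmidtNumberLE d (Matrix.diagonal fun p => (b p : ℂ)) n := by
  have := of_fintype (n := n) (fun p : Fin d × Fin d => Pi.single p ((Real.sqrt (b p) : ℝ) : ℂ)) (by
    intro p
    refine le_trans ?_ hn
    have : toMat d (Pi.single p ((Real.sqrt (b p) : ℝ) : ℂ)) =
        Matrix.vecMulVec (Pi.single p.1 ((Real.sqrt (b p) : ℝ) : ℂ)) (Pi.single p.2 1) := by
      ext x y
      obtain ⟨u, v⟩ := p
      simp only [toMat, Matrix.of_apply, Matrix.vecMulVec_apply, Pi.single_apply, Prod.mk.injEq]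
      by_cases h : x = u <;> by_cases h' : y = v <;> simp [h, h']
    rw [this]
    exact Matrix.rank_vecMulVec_le _ _)
  convert this using 1
  ext p q
  simp only [Matrix.sum_apply, Matrix.vecMulVec_apply, Pi.star_apply, Matrix.diagonal_apply]
  rw [Finset.sum_eq_single p]
  · by_cases h : p = q
    · subst h
      simp [← Complex.ofReal_mul, Real.mul_self_sqrt (hb p)]
    · simp [h, Ne.symm h]
  · intro r _ hr
    simp [Pi.single_apply, hr.symm]
  · simp

lemma perm_diag {d : ℕ} (g : Fin d → ℂ) (i : Fin d) :
    (d : ℂ) * ∑ σ : Equiv.Perm (Fin d), g (σ i) = (d.factorial : ℂ) * ∑ x, g x := by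
  have hc : ∀ j, ∑ σ : Equiv.Perm (Fin d), g (σ j) = ∑ σ : Equiv.Perm (Fin d), g (σ i) := by
    intro j
    rw [← Equiv.sum_comp (Equiv.mulRight (Equiv.swap i j))]
    simp
  have h1 : ∑ j, ∑ σ : Equiv.Perm (Fin d), g (σ j) = (d.factorial : ℂ) * ∑ x, g x := by
    rw [Finset.sum_comm]
    simp [Equiv.sum_comp, Fintype.card_perm]
  rw [← h1]
  simp [hc]

lemma perm_off {d : ℕ} (g : Fin d → Fin d → ℂ) (i j : Fin d) (hij : i ≠ j) :
    (d : ℂ) * (d - 1) * ∑ σ : Equiv.Perm (Fin d), g (σ i) (σ j) =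
      (d.factorial : ℂ) * (∑ x, ∑ y, g x y - ∑ x, g x x) := by
  set K := ∑ σ : Equiv.Perm (Fin d), g (σ i) (σ j) with hK
  have hc : ∀ x y, x ≠ y → ∑ σ : Equiv.Perm (Fin d), g (σ x) (σ y) = K := by
    intro x y hxy
    obtain ⟨τ, h1, h2⟩ : ∃ τ : Equiv.Perm (Fin d), τ x = i ∧ τ y = j := by
      refine ⟨Equiv.swap (Equiv.swap x i y) j * Equiv.swap x i, ?_, by simp⟩
      simp only [Equiv.Perm.mul_apply, Equiv.swap_apply_left]
      apply Equiv.swap_apply_of_ne_of_ne _ hij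
      intro h
      have : Equiv.swap x i x = Equiv.swap x i y := by simpa using h
      exact hxy ((Equiv.swap x i).injective this)
    rw [hK, ← Equiv.sum_comp (Equiv.mulRight τ) (fun σ : Equiv.Perm (Fin d) => g (σ x) (σ y))]
    simp [h1, h2]
  have h1 : ∑ x, ∑ y, ∑ σ : Equiv.Perm (Fin d), g (σ x) (σ y)
      = (d.factorial : ℂ) * ∑ x, ∑ y, g x y := by
    have : ∀ σ : Equiv.Perm (Fin d), ∑ x, ∑ y, g (σ x) (σ y) = ∑ x, ∑ y, g x y := by
      intro σ
      rw [← Equiv.sum_comp σ (fun x => ∑ y, g x y)]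
      exact Finset.sum_congr rfl fun x _ => Equiv.sum_comp σ (fun y => g (σ x) y)
    calc _ = ∑ x, ∑ σ : Equiv.Perm (Fin d), ∑ y, g (σ x) (σ y) :=
          Finset.sum_congr rfl fun x _ => Finset.sum_comm
      _ = ∑ σ : Equiv.Perm (Fin d), ∑ x, ∑ y, g (σ x) (σ y) := Finset.sum_comm
      _ = _ := by simp [this, Fintype.card_perm]
  have h2 : ∑ x, ∑ σ : Equiv.Perm (Fin d), g (σ x) (σ x)
      = (d.factorial : ℂ) * ∑ x, g x x := by
    rw [Finset.sum_comm]
    have : ∀ σ : Equiv.Perm (Fin d), ∑ x, g (σ x) (σ x) = ∑ x, g x x :=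
      fun σ => Equiv.sum_comp σ (fun x => g x x)
    simp [this, Fintype.card_perm]
  rw [mul_sub (d.factorial : ℂ), ← h1, ← h2, ← Finset.sum_sub_distrib]
  have h3 : ∀ x, ∑ y, ∑ σ : Equiv.Perm (Fin d), g (σ x) (σ y)
      - ∑ σ : Equiv.Perm (Fin d), g (σ x) (σ x) = (d - 1) * K := by
    intro x
    rw [← Finset.add_sum_erase _ _ (Finset.mem_univ x), add_sub_cancel_left,
      Finset.sum_congr rfl (fun y hy => hc x y (Finset.ne_of_mem_erase hy).symm)]
    have : 1 ≤ d := by have := x.2; omega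
    simp [Finset.card_erase_of_mem, Nat.cast_sub this]
  simp only [h3]
  simp [mul_assoc]

/-- cube root phases -/
lemma phase_exists : ∃ χ : ZMod 3 → ℂ, (∀ x y, χ (x + y) = χ x * χ y) ∧ (∀ x, χ x ≠ 1 ↔ x ≠ 0) ∧
    (∀ x, star (χ x) = χ (-x)) := by
  refine ⟨ZMod.stdAddChar, fun x y => AddChar.map_add_eq_mul _ x y, ?_, ?_⟩
  · intro x
    have := ZMod.injective_stdAddChar (N := 3)
    rw [not_iff_not, ← AddChar.map_zero_eq_one (ZMod.stdAddChar (N := 3))]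
    exact this.eq_iff
  · intro x
    rw [AddChar.map_neg_eq_conj]; rfl

lemma phase_sum {d : ℕ} (χ : ZMod 3 → ℂ) (h1 : ∀ x y, χ (x + y) = χ x * χ y)
    (h2 : ∀ x, χ x ≠ 1 ↔ x ≠ 0) (i j k l : Fin d)
    (h : ¬ (i = k ∧ j = l)) (h' : ¬ (i = j ∧ k = l)) :
    ∑ θ : Fin d → ZMod 3, χ (θ i - θ j - θ k + θ l) = 0 := by
  obtain ⟨m, hm⟩ : ∃ m : Fin d, (Pi.single m 1 : Fin d → ZMod 3) i - (Pi.single m 1 : Fin d → ZMod 3) j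
      - (Pi.single m 1 : Fin d → ZMod 3) k + (Pi.single m 1 : Fin d → ZMod 3) l ≠ 0 := by
    by_contra! hc
    have hi := hc i
    have hl := hc l
    simp only [Pi.single_apply] at hi hl
    have e2 : (1 + 1 : ZMod 3) ≠ 0 := by decide
    have e1 : (1 : ZMod 3) ≠ 0 := by decide
    by_cases a1 : j = i
    · subst a1
      by_cases a2 : k = l
      · exact h' ⟨rfl, a2⟩
      · simp [a2] at hl
    · by_cases a2 : k = i
      · subst a2
        by_cases a3 : j = l
        · exact h ⟨rfl, a3⟩
        · simp [a3] at hl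
      · by_cases a3 : l = i
        · simp [a1, a2, a3, e2] at hi
        · simp [a1, a2, a3] at hi
  set e := (Pi.single m 1 : Fin d → ZMod 3)
  have key : ∑ θ : Fin d → ZMod 3, χ (θ i - θ j - θ k + θ l) =
      χ (e i - e j - e k + e l) * ∑ θ : Fin d → ZMod 3, χ (θ i - θ j - θ k + θ l) := by
    conv_lhs => rw [← Equiv.sum_comp (Equiv.addRight e)]
    rw [Finset.mul_sum]
    refine Finset.sum_congr rfl fun θ _ => ?_
    rw [← h1]
    congr 1
    simp only [Equiv.coe_addRight, Pi.add_apply]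
    ring
  have hne := (h2 _).2 hm
  have : (χ (e i - e j - e k + e l) - 1) * ∑ θ : Fin d → ZMod 3, χ (θ i - θ j - θ k + θ l) = 0 := by
    rw [sub_mul, ← key]; ring
  rcases mul_eq_zero.1 this with h0 | h0
  · exact absurd (sub_eq_zero.1 h0) hne
  · exact h0

/-- The twirl-invariant matrices. -/
noncomputable def Q (d : ℕ) (A B C : ℂ) : Matrix (Fin d × Fin d) (Fin d × Fin d) ℂ :=
  Matrix.of fun p q => if p = q then (if p.1 = p.2 then C else B)
    else if p.1 = p.2 ∧ q.1 = q.2 then A else 0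

lemma twirl {d n : ℕ} (hd : 2 ≤ d) (M : Matrix (Fin d) (Fin d) ℂ) (hM : M.rank ≤ n)
    (S1 S2 S3 : ℂ) (h1 : ∑ i, M i i * star (M i i) = S1)
    (h2 : ∑ i, ∑ k, M i i * star (M k k) = S2)
    (h3 : ∑ i, ∑ j, M i j * star (M i j) = S3) :
    SchmidtNumberLE d (Q d ((S2 - S1) / (d * (d - 1))) ((S3 - S1) / (d * (d - 1))) (S1 / d)) n := by
  obtain ⟨χ, c1, c2, c3⟩ := phase_exists
  have hT := of_fintype (n := n) (fun (s : Equiv.Perm (Fin d) × (Fin d → ZMod 3)) (p : Fin d × Fin d) =>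
    χ (s.2 p.1) * M (s.1 p.1) (s.1 p.2) * χ (- s.2 p.2)) (by
    rintro ⟨σ, θ⟩
    have : toMat d (fun p => χ (θ p.1) * M (σ p.1) (σ p.2) * χ (- θ p.2)) =
        Matrix.diagonal (fun i => χ (θ i)) * M.submatrix σ σ * Matrix.diagonal (fun i => χ (- θ i)) := by
      ext x y; simp [toMat]
    simp only
    rw [this]
    refine (Matrix.rank_mul_le_left _ _).trans ((Matrix.rank_mul_le_right _ _).trans ?_)
    rw [Matrix.rank_submatrix]
    exact hM)
  have h0 : χ 0 = 1 := by
    by_contra h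
    exact (c2 0).1 h rfl
  have hdf : (d.factorial : ℂ) ≠ 0 := by exact_mod_cast d.factorial_ne_zero
  have hd0 : (d : ℂ) ≠ 0 := by exact_mod_cast (by omega : d ≠ 0)
  have hd1 : (d : ℂ) - 1 ≠ 0 := by
    rw [sub_ne_zero]; exact_mod_cast (by omega : d ≠ 1)
  have hS := smul hT (((d.factorial : ℝ) * 3 ^ d)⁻¹) (by positivity)
  convert hS using 1
  ext ⟨i, j⟩ ⟨k, l⟩
  have hentry : (∑ s : Equiv.Perm (Fin d) × (Fin d → ZMod 3), Matrix.vecMulVec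
      (fun p : Fin d × Fin d => χ (s.2 p.1) * M (s.1 p.1) (s.1 p.2) * χ (- s.2 p.2))
      (star (fun p : Fin d × Fin d => χ (s.2 p.1) * M (s.1 p.1) (s.1 p.2) * χ (- s.2 p.2)))) (i, j) (k, l)
      = (∑ σ : Equiv.Perm (Fin d), M (σ i) (σ j) * star (M (σ k) (σ l))) *
        ∑ θ : Fin d → ZMod 3, χ (θ i - θ j - θ k + θ l) := by
    rw [Finset.sum_mul_sum, ← Finset.univ_product_univ, Finset.sum_product, Matrix.sum_apply]
    simp only [Matrix.sum_apply, Matrix.vecMulVec_apply, Pi.star_apply, star_mul', c3, neg_neg]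
    refine Finset.sum_congr rfl fun σ _ => Finset.sum_congr rfl fun θ _ => ?_
    rw [sub_eq_add_neg, sub_eq_add_neg, c1, c1, c1]
    ring
  have hcard : ((Fintype.card (Fin d → ZMod 3) : ℕ) : ℂ) = 3 ^ d := by
    simp [ZMod.card]
  rw [Matrix.smul_apply, hentry]
  simp only [Q, Matrix.of_apply, smul_eq_mul, Prod.mk.injEq]
  push_cast
  by_cases hp : i = k ∧ j = l
  · obtain ⟨rfl, rfl⟩ := hp
    have : ∀ θ : Fin d → ZMod 3, θ i - θ j - θ i + θ j = 0 := fun θ => by ring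
    simp only [this, h0, Finset.sum_const, Finset.card_univ, nsmul_eq_mul, hcard, mul_one, and_self, if_true]
    split_ifs with hij
    · subst hij
      have := perm_diag (fun x => M x x * star (M x x)) i
      rw [h1] at this
      field_simp
      linear_combination -this
    · have := perm_off (fun x y => M x y * star (M x y)) i j hij
      rw [h1, h3] at this
      field_simp
      linear_combination -this
  · rw [if_neg hp]
    by_cases hq : i = j ∧ k = l
    · obtain ⟨rfl, rfl⟩ := hq
      have hik : i ≠ k := fun h => hp ⟨h, h⟩
      have : ∀ θ : Fin d → ZMod 3, θ i - θ i - θ k + θ k = 0 := fun θ => by ring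
      simp only [this, h0, Finset.sum_const, Finset.card_univ, nsmul_eq_mul, hcard, mul_one, and_self, if_true]
      have := perm_off (fun x y => M x x * star (M y y)) i k hik
      rw [h1, h2] at this
      field_simp
      linear_combination -this
    · rw [if_neg hq, phase_sum χ c1 c2 i j k l hp hq]
      simp

lemma case1 {d n : ℕ} (hd : 2 ≤ d) (hnd : n < d) :
    SchmidtNumberLE d (Q d (((n : ℂ) ^ 2 - n) / (d * (d - 1))) 0 (n / d)) n := by
  have hcard : (Finset.univ.filter (fun i : Fin d => (i : ℕ) < n)).card = n := by
    rw [Fin.card_filter_val_lt]; omega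
  have hsum : ∑ i : Fin d, (if (i : ℕ) < n then (1 : ℂ) else 0) = n := by
    rw [Finset.sum_boole, hcard]
  have := twirl (n := n) hd (Matrix.diagonal (fun i : Fin d => if (i : ℕ) < n then (1 : ℂ) else 0))
    (by
      rw [Matrix.rank_diagonal]
      simp only [ne_eq, ite_eq_right_iff, one_ne_zero, imp_false, not_not]
      rw [Fintype.card_subtype, hcard])
    n (n ^ 2) n
    (by
      rw [← hsum]
      refine Finset.sum_congr rfl fun i _ => ?_
      simp)
    (by
      simp only [Matrix.diagonal_apply_eq]
      rw [← Finset.sum_mul_sum, ← star_sum, hsum]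
      simp [sq])
    (by
      rw [← hsum]
      refine Finset.sum_congr rfl fun i _ => ?_
      rw [Finset.sum_eq_single i]
      · simp
      · intro j _ hj; simp [Matrix.diagonal_apply_ne _ hj.symm]
      · simp)
  simpa using this

lemma case2 {d n : ℕ} (hd : 2 ≤ d) (hnd : n < d) :
    SchmidtNumberLE d (Q d ((n : ℂ) ^ 2) (n * (d - n) / (d - 1)) ((n : ℂ) ^ 2)) n := by
  have hd0 : (d : ℂ) ≠ 0 := by exact_mod_cast (by omega : d ≠ 0)
  have hd1 : (d : ℂ) - 1 ≠ 0 := by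
    rw [sub_ne_zero]; exact_mod_cast (by omega : d ≠ 1)
  obtain ⟨ζ, hζ⟩ : ∃ ζ : ℂ, IsPrimitiveRoot ζ d := ⟨_, Complex.isPrimitiveRoot_exp d (by omega)⟩
  have hn1 : star ζ * ζ = 1 := by
    have : ‖ζ‖ = 1 := hζ.norm'_eq_one (by omega)
    rw [Complex.star_def, Complex.conj_mul', this]; simp
  have hpow : ∀ k : ℕ, star ζ ^ k * ζ ^ k = 1 := fun k => by rw [← mul_pow, hn1, one_pow]
  set U : Matrix (Fin d) (Fin n) ℂ := Matrix.of fun i s => ζ ^ ((i : ℕ) * (s : ℕ)) with hU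
  have hUU : Uᴴ * U = (d : ℂ) • 1 := by
    ext s t
    simp only [Matrix.mul_apply, Matrix.conjTranspose_apply, hU, Matrix.of_apply, Matrix.smul_apply,
      Matrix.one_apply, smul_eq_mul, star_pow]
    by_cases hst : s = t
    · subst hst; simp only [hpow]; simp
    · rw [if_neg hst, mul_zero]
      set z := star ζ ^ (s : ℕ) * ζ ^ (t : ℕ) with hz
      have e : ∑ i : Fin d, star ζ ^ ((i : ℕ) * (s : ℕ)) * ζ ^ ((i : ℕ) * (t : ℕ)) =
          ∑ i ∈ Finset.range d, z ^ i := by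
        rw [← Fin.sum_univ_eq_sum_range (fun i => z ^ i)]
        refine Finset.sum_congr rfl fun i _ => ?_
        rw [hz, mul_pow, ← pow_mul, ← pow_mul, mul_comm (s : ℕ), mul_comm (t : ℕ)]
      rw [e]
      have hzd : z ^ d = 1 := by
        rw [hz, mul_pow, ← pow_mul, ← pow_mul, mul_comm (s : ℕ), mul_comm (t : ℕ), pow_mul, pow_mul,
          ← star_pow, hζ.pow_eq_one]
        simp
      have hz1 : z ≠ 1 := by
        intro h
        have : ζ ^ (t : ℕ) = ζ ^ (s : ℕ) := by
          calc ζ ^ (t : ℕ) = (star ζ ^ (s : ℕ) * ζ ^ (s : ℕ)) * ζ ^ (t : ℕ) := by rw [hpow, one_mul]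
            _ = z * ζ ^ (s : ℕ) := by rw [hz]; ring
            _ = _ := by rw [h, one_mul]
        have := hζ.pow_inj (by have := t.2; omega) (by have := s.2; omega) this
        exact hst (Fin.ext this.symm)
      have := geom_sum_mul z d
      rw [hzd, sub_self] at this
      exact (mul_eq_zero.1 this).resolve_right (sub_ne_zero.2 hz1)
  have hdiag : ∀ i, (U * Uᴴ) i i = n := by
    intro i
    simp only [Matrix.mul_apply, Matrix.conjTranspose_apply, hU, Matrix.of_apply, star_pow]
    simp only [mul_comm (ζ ^ _), hpow]; simp
  have := twirl (n := n) hd (U * Uᴴ)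
    ((Matrix.rank_mul_le_left _ _).trans (by simpa using Matrix.rank_le_width U))
    (d * n ^ 2) (d ^ 2 * n ^ 2) (n * d ^ 2)
    (by simp only [hdiag]; simp [sq]) (by simp only [hdiag]; simp; ring)
    (by
      have : ∑ i, ∑ j, (U * Uᴴ) i j * star ((U * Uᴴ) i j) = Matrix.trace ((U * Uᴴ) * (U * Uᴴ)ᴴ) := by
        simp only [Matrix.trace, Matrix.diag_apply, Matrix.mul_apply (M := U * Uᴴ), Matrix.conjTranspose_apply]
      rw [this]
      have e : (U * Uᴴ) * (U * Uᴴ)ᴴ = (d : ℂ) • (U * Uᴴ) := by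
        rw [Matrix.conjTranspose_mul, Matrix.conjTranspose_conjTranspose, Matrix.mul_assoc,
          ← Matrix.mul_assoc Uᴴ, hUU]
        simp
      rw [e, Matrix.trace_smul, Matrix.trace]
      simp [hdiag]; ring)
  convert this using 2 <;> field_simp <;> ring

end SNProof

theorem weak_upper_bound_random_schmidt_robustness (d n : ℕ) (hd : 2 ≤ d) (hn : 1 ≤ n)
    (hnd : n < d) (a : Fin d → ℝ) (ha : ∀ i, 0 ≤ a i) (hnorm : ∑ i, a i ^ 2 = 1) :
    SchmidtNumberLE d
      (Matrix.vecMulVec (ketDiag d a) (star (ketDiag d a)) +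
        (((d : ℝ) - n) / ((n : ℝ) * d - 1)) •
          (1 : Matrix (Fin d × Fin d) (Fin d × Fin d) ℂ)) n := by
  have hD : (0 : ℝ) < (n : ℝ) * d - 1 := by
    have h1 : (1 : ℝ) ≤ n := by exact_mod_cast hn
    have h2 : (2 : ℝ) ≤ d := by exact_mod_cast hd
    nlinarith
  have hdr : (1 : ℝ) < d := by exact_mod_cast (by omega : 1 < d)
  have hnr : (0 : ℝ) < n := by exact_mod_cast (by omega : 0 < n)
  have hndr : (n : ℝ) < d := by exact_mod_cast hnd
  set c : ℝ := ((d : ℝ) - n) / ((n : ℝ) * d - 1) with hc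
  have hc0 : 0 ≤ c := div_nonneg (by linarith) hD.le
  have hDc : (n : ℂ) * d - 1 ≠ 0 := by exact_mod_cast hD.ne'
  have hd0 : (d : ℂ) ≠ 0 := by exact_mod_cast (by omega : d ≠ 0)
  have hn0 : (n : ℂ) ≠ 0 := by exact_mod_cast (by omega : n ≠ 0)
  have hd1 : (d : ℂ) - 1 ≠ 0 := by
    rw [sub_ne_zero]; exact_mod_cast (by omega : d ≠ 1)
  have hcc : (c : ℂ) = ((d : ℂ) - n) / ((n : ℂ) * d - 1) := by rw [hc]; push_cast; rfl
  have hiso : SchmidtNumberLE d (SNProof.Q d 1 c (1 + c)) n := by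
    have h1 := SNProof.smul (SNProof.case1 (n := n) hd hnd) ((d : ℝ) * (d - 1) / (n * (n * d - 1)))
      (div_nonneg (mul_nonneg (by linarith) (by linarith)) (mul_nonneg hnr.le hD.le))
    have h2 := SNProof.smul (SNProof.case2 (n := n) hd hnd) (((d : ℝ) - 1) / (n * (n * d - 1)))
      (div_nonneg (by linarith) (mul_nonneg hnr.le hD.le))
    convert SNProof.add h1 h2 using 1
    ext p q
    simp only [SNProof.Q, Matrix.add_apply, Matrix.smul_apply, Matrix.of_apply, smul_eq_mul, hcc]
    push_cast
    obtain ⟨E, hE⟩ : ∃ E : ℂ, E = (n : ℂ) * d - 1 := ⟨_, rfl⟩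
    rw [← hE] at hDc ⊢
    split_ifs <;> field_simp <;> (try rw [hE]) <;> ring
  have hle : ∀ i, a i ^ 2 ≤ 1 := fun i => by
    rw [← hnorm]
    exact Finset.single_le_sum (f := fun i => a i ^ 2) (fun j _ => sq_nonneg _) (Finset.mem_univ i)
  have hfin := SNProof.add (SNProof.localop hiso (fun i => (a i : ℂ)))
    (SNProof.diag hn (fun p => c * (1 - a p.1 ^ 2)) (fun p => mul_nonneg hc0 (by linarith [hle p.1])))
  convert hfin using 1
  ext ⟨i, j⟩ ⟨k, l⟩
  simp only [SNProof.Q, Matrix.add_apply, Matrix.smul_apply, Matrix.of_apply, Matrix.diagonal_apply,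
    Matrix.vecMulVec_apply, Pi.star_apply, ketDiag, Matrix.one_apply, Complex.real_smul,
    Complex.star_def, Complex.conj_ofReal]
  by_cases hp : (i, j) = (k, l)
  · obtain ⟨rfl, rfl⟩ := Prod.mk.inj hp
    by_cases hij : i = j
    · subst hij; simp; ring
    · simp [hij]; ring
  · simp only [hp, if_false]
    by_cases hij : i = j <;> by_cases hkl : k = l <;> simp [hij, hkl]
end

section
/- Intermediate step for the random Schmidt robustness bound: let d ≥ 2, 1 ≤ n < d, and let a_1, …, a_d ≥ 0 with Σ_i a_i² = 1; set ψ = Σ_i a_i |ii⟩. Then the matrix ((dn−1)/(d−n)) · ψψ† + Σ_{i,j} a_i a_j |ij⟩⟨ij| on ℂ^d ⊗ ℂ^d has Schmidt number at most n. -/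
open Matrix BigOperators Kronecker ComplexOrder

theorem sidon_two_pow : ∀ i l j k : ℕ, 2 ^ i + 2 ^ l = 2 ^ j + 2 ^ k →
    (i = j ∧ l = k) ∨ (i = k ∧ l = j) := by
  intro i
  induction i with
  | zero =>
    intro l j k h
    have hl := Nat.one_le_two_pow (n := l)
    have hj := Nat.one_le_two_pow (n := j)
    have hk := Nat.one_le_two_pow (n := k)
    rcases j with _ | j
    · left
      refine ⟨rfl, Nat.pow_right_injective (le_refl 2) ?_⟩
      simpa using h
    · rcases k with _ | k
      · right
        refine ⟨rfl, Nat.pow_right_injective (le_refl 2) ?_⟩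
        simp only [pow_zero] at h ⊢
        omega
      · rcases l with _ | l <;> simp only [pow_succ, pow_zero] at * <;> omega
  | succ i ih =>
    intro l j k h
    have hi := Nat.one_le_two_pow (n := i)
    have hj := Nat.one_le_two_pow (n := j)
    have hk := Nat.one_le_two_pow (n := k)
    rcases l with _ | l
    · rcases j with _ | j
      · right
        refine ⟨Nat.pow_right_injective (le_refl 2) ?_, rfl⟩
        simp only [pow_zero] at h ⊢
        omega
      · rcases k with _ | k
        · left
          refine ⟨Nat.pow_right_injective (le_refl 2) ?_, rfl⟩
          simp only [pow_zero] at h ⊢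
          omega
        · simp only [pow_succ, pow_zero] at *; omega
    · have hl := Nat.one_le_two_pow (n := l)
      rcases j with _ | j
      · rcases k with _ | k <;> simp only [pow_succ, pow_zero] at * <;> omega
      · rcases k with _ | k
        · simp only [pow_succ, pow_zero] at *; omega
        · have := ih l j k (by simp only [pow_succ] at h; omega)
          omega

theorem SN_zero (d n : ℕ) : SchmidtNumberLE d 0 n := ⟨0, fun i => i.elim0, fun i => i.elim0, by simp⟩

theorem SN_add {d n : ℕ} {A B} (hA : SchmidtNumberLE d A n) (hB : SchmidtNumberLE d B n) :
    SchmidtNumberLE d (A + B) n := by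
  obtain ⟨k, w, hw, rfl⟩ := hA
  obtain ⟨l, v, hv, rfl⟩ := hB
  refine ⟨k + l, Fin.append w v, ?_, ?_⟩
  · intro i
    induction i using Fin.addCases <;> simp [hw, hv]
  · simp [Fin.sum_univ_add]

theorem SN_sum {d n : ℕ} {ι : Type*} (s : Finset ι) (A : ι → Matrix (Fin d × Fin d) (Fin d × Fin d) ℂ)
    (hA : ∀ i ∈ s, SchmidtNumberLE d (A i) n) : SchmidtNumberLE d (∑ i ∈ s, A i) n :=
  Finset.sum_induction _ (fun A => SchmidtNumberLE d A n) (fun _ _ => SN_add) (SN_zero d n) hA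

theorem rank_sum_vec {d : ℕ} {ι : Type*} (s : Finset ι) (f g : ι → Fin d → ℂ) :
    (∑ k ∈ s, vecMulVec (f k) (g k)).rank ≤ s.card := by
  have h : ∑ k ∈ s, vecMulVec (f k) (g k) =
      (Matrix.of fun (i : Fin d) (k : s) => f k i) * (Matrix.of fun (k : s) (j : Fin d) => g k j) := by
    ext i j
    simp only [Matrix.sum_apply, vecMulVec_apply, Matrix.mul_apply, Matrix.of_apply]
    exact (Finset.sum_coe_sort s (fun k => f k i * g k j)).symm
  rw [h]
  refine (Matrix.rank_mul_le_left _ _).trans ((Matrix.rank_le_card_width _).trans ?_)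
  simp

theorem SN_smul_single {d n : ℕ} (c : ℝ) (hc : 0 ≤ c) (w : Fin d × Fin d → ℂ)
    (S : Finset (Fin d)) (hS : S.card ≤ n) (f g : Fin d → Fin d → ℂ)
    (hw : ∀ i j, w (i, j) = ∑ k ∈ S, f k i * g k j) :
    SchmidtNumberLE d (c • vecMulVec w (star w)) n := by
  refine ⟨1, fun _ => (Real.sqrt c : ℂ) • w, ?_, ?_⟩
  · intro _
    have : toMat d ((Real.sqrt c : ℂ) • w) =
        ∑ k ∈ S, vecMulVec ((Real.sqrt c : ℂ) • f k) (g k) := by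
      ext i j
      simp [toMat, hw, Matrix.sum_apply, vecMulVec_apply, Finset.mul_sum]
    rw [this]
    exact (rank_sum_vec _ _ _).trans hS
  · ext p q
    have : (Real.sqrt c : ℂ) * Real.sqrt c = c := by
      rw [← Complex.ofReal_mul, Real.mul_self_sqrt hc]
    simp [vecMulVec_apply]
    linear_combination (-(w p * (starRingEnd ℂ) (w q))) * this

theorem counts (d n : ℕ) (hn : 1 ≤ n) (hnd : n < d) : ∃ r μ : ℝ, 0 < r ∧
    (∀ k l : Fin d, ∑ S ∈ Finset.powersetCard n (Finset.univ : Finset (Fin d)),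
      (if k ∈ S then (1:ℝ) else 0) * (if l ∈ S then 1 else 0) = if k = l then r else μ) ∧
    r * d = n * (Finset.powersetCard n (Finset.univ : Finset (Fin d))).card ∧
    r * (n - 1) = (d - 1) * μ := by
  have key : ∃ r μ : ℝ, 0 < r ∧
    (∀ k l : Fin d, ∑ S ∈ Finset.powersetCard n (Finset.univ : Finset (Fin d)),
      (if k ∈ S then (1:ℝ) else 0) * (if l ∈ S then 1 else 0) = if k = l then r else μ) := by
    refine ⟨((d-1).choose (n-1) : ℕ), if 2 ≤ n then ((d-2).choose (n-2) : ℕ) else 0, ?_, ?_⟩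
    · exact_mod_cast Nat.choose_pos (by omega)
    · intro k l
      have h1 : ∀ S : Finset (Fin d), (if k ∈ S then (1:ℝ) else 0) * (if l ∈ S then 1 else 0) =
          if ({k, l} : Finset (Fin d)) ⊆ S then 1 else 0 := by
        intro S
        by_cases h : k ∈ S <;> by_cases h' : l ∈ S <;> simp [h, h', Finset.insert_subset_iff]
      simp_rw [h1]
      rw [Finset.sum_boole]
      by_cases hkl : k = l
      · subst hkl
        rw [Finset.card_filter_powersetCard_subset _ _ _ (by simp) (by simpa using hn)]
        simp
      · have hc : ({k, l} : Finset (Fin d)).card = 2 := Finset.card_pair hkl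
        by_cases h2 : 2 ≤ n
        · rw [Finset.card_filter_powersetCard_subset _ _ _ (by simp) (by omega)]
          simp [hc, hkl, h2]
        · rw [if_neg hkl, if_neg h2]
          norm_cast
          rw [Finset.card_eq_zero, Finset.filter_eq_empty_iff]
          intro S hS hs
          have := Finset.card_le_card hs
          rw [Finset.mem_powersetCard] at hS
          omega
  obtain ⟨r, μ, hr, h⟩ := key
  have hcard : ∀ S ∈ Finset.powersetCard n (Finset.univ : Finset (Fin d)),
      ∑ l : Fin d, (if l ∈ S then (1:ℝ) else 0) = n := by
    intro S hS
    rw [Finset.mem_powersetCard] at hS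
    simp [hS.2]
  have hdiag : ∀ k : Fin d, ∑ S ∈ Finset.powersetCard n (Finset.univ : Finset (Fin d)),
      (if k ∈ S then (1:ℝ) else 0) = r := by
    intro k
    rw [← (h k k).trans (if_pos rfl)]
    refine Finset.sum_congr rfl fun S _ => ?_
    split_ifs <;> simp
  refine ⟨r, μ, hr, h, ?_, ?_⟩
  · have e1 : ∑ k : Fin d, ∑ S ∈ Finset.powersetCard n (Finset.univ : Finset (Fin d)),
      (if k ∈ S then (1:ℝ) else 0) = d * r := by simp_rw [hdiag]; simp
    rw [Finset.sum_comm, Finset.sum_congr rfl hcard, Finset.sum_const, nsmul_eq_mul] at e1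
    linarith
  · let k0 : Fin d := ⟨0, by omega⟩
    have e1 : ∑ l : Fin d, ∑ S ∈ Finset.powersetCard n (Finset.univ : Finset (Fin d)),
      (if k0 ∈ S then (1:ℝ) else 0) * (if l ∈ S then 1 else 0) = n * r := by
      rw [Finset.sum_comm]
      simp_rw [← Finset.mul_sum]
      rw [Finset.sum_congr rfl (fun S hS => by rw [hcard S hS]), ← Finset.sum_mul, hdiag, mul_comm]
    have e2 : ∑ l : Fin d, (if k0 = l then r else μ) = r + (d - 1) * μ := by
      have : ∀ l : Fin d, (if k0 = l then r else μ) = μ + if k0 = l then r - μ else 0 := by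
        intro l; split_ifs <;> ring
      simp_rw [this]
      rw [Finset.sum_add_distrib]
      simp
      ring
    simp_rw [h] at e1
    linarith

theorem phase_sum (d : ℕ) (i j k l : Fin d) :
    ∑ t : ZMod (2 ^ (d + 1)), (ZMod.stdAddChar (t * (2 ^ (i:ℕ) - 2 ^ (j:ℕ))) : ℂ) *
      star (ZMod.stdAddChar (t * (2 ^ (k:ℕ) - 2 ^ (l:ℕ))) : ℂ) =
    if (i = j ∧ k = l) ∨ (i = k ∧ j = l) then (2 ^ (d + 1) : ℂ) else 0 := by
  have e : ∀ t : ZMod (2 ^ (d + 1)), (ZMod.stdAddChar (t * (2 ^ (i:ℕ) - 2 ^ (j:ℕ))) : ℂ) *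
      star (ZMod.stdAddChar (t * (2 ^ (k:ℕ) - 2 ^ (l:ℕ))) : ℂ) =
      ZMod.stdAddChar (t * (2 ^ (i:ℕ) - 2 ^ (j:ℕ) - (2 ^ (k:ℕ) - 2 ^ (l:ℕ)))) := by
    intro t
    rw [← starRingEnd_apply, ← AddChar.map_neg_eq_conj, ← AddChar.map_add_eq_mul]
    congr 1; ring
  simp_rw [e]
  rw [AddChar.sum_mulShift _ (ZMod.isPrimitive_stdAddChar _)]
  have hb : ((2 ^ (i:ℕ) - 2 ^ (j:ℕ) - (2 ^ (k:ℕ) - 2 ^ (l:ℕ)) : ZMod (2 ^ (d + 1))) = 0) ↔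
      ((i = j ∧ k = l) ∨ (i = k ∧ j = l)) := by
    constructor
    · intro h
      have h2 : ((2 ^ (i:ℕ) + 2 ^ (l:ℕ) : ℕ) : ZMod (2 ^ (d + 1))) =
          ((2 ^ (j:ℕ) + 2 ^ (k:ℕ) : ℕ) : ZMod (2 ^ (d + 1))) := by
        push_cast
        linear_combination h
      have hlt : ∀ x : Fin d, 2 ^ (x:ℕ) < 2 ^ d := fun x =>
        Nat.pow_lt_pow_right (by norm_num) x.2
      rw [ZMod.natCast_eq_natCast_iff', Nat.mod_eq_of_lt, Nat.mod_eq_of_lt] at h2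
      · rcases sidon_two_pow _ _ _ _ h2 with ⟨h, h'⟩ | ⟨h, h'⟩
        · exact Or.inl ⟨Fin.ext h, (Fin.ext h').symm⟩
        · exact Or.inr ⟨Fin.ext h, (Fin.ext h').symm⟩
      · have := hlt j; have := hlt k; rw [pow_succ]; omega
      · have := hlt i; have := hlt l; rw [pow_succ]; omega
    · rintro (⟨rfl, rfl⟩ | ⟨rfl, rfl⟩) <;> ring
  simp only [hb]
  split_ifs <;> simp [ZMod.card]

theorem fourier_sum (d : ℕ) [NeZero d] (i j : Fin d) :
    ∑ k : Fin d, (ZMod.stdAddChar (((k : ℕ) : ZMod d) * (((i : ℕ) : ZMod d) - ((j : ℕ) : ZMod d))) : ℂ)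
      = if i = j then (d : ℂ) else 0 := by
  have hbij : Function.Bijective (fun k : Fin d => ((k : ℕ) : ZMod d)) := by
    rw [Fintype.bijective_iff_injective_and_card]
    refine ⟨fun a b h => ?_, by simp [ZMod.card]⟩
    simp only [ZMod.natCast_eq_natCast_iff', Nat.mod_eq_of_lt a.2, Nat.mod_eq_of_lt b.2] at h
    exact Fin.ext h
  rw [hbij.sum_comp (fun x : ZMod d => (ZMod.stdAddChar (x * (((i : ℕ) : ZMod d) - ((j : ℕ) : ZMod d))) : ℂ)),
    AddChar.sum_mulShift _ (ZMod.isPrimitive_stdAddChar _)]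
  have : ((((i : ℕ) : ZMod d) - ((j : ℕ) : ZMod d)) = 0) ↔ i = j := by
    rw [sub_eq_zero]; exact hbij.1.eq_iff
  simp only [this]
  split_ifs <;> simp [ZMod.card]

noncomputable def vecX (d : ℕ) [NeZero d] (S : Finset (Fin d)) (i j : Fin d) : ℂ :=
  ∑ k ∈ S, (ZMod.stdAddChar
    (((k : ℕ) : ZMod d) * (((i : ℕ) : ZMod d) - ((j : ℕ) : ZMod d))) : ℂ)

theorem vecX_diag (d : ℕ) [NeZero d] (S : Finset (Fin d)) (i : Fin d) :
    vecX d S i i = S.card := by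
  simp [vecX]

theorem vecX_sum (d n : ℕ) [NeZero d] (r μ : ℝ)
    (h : ∀ k l : Fin d, ∑ S ∈ Finset.powersetCard n (Finset.univ : Finset (Fin d)),
      (if k ∈ S then (1:ℝ) else 0) * (if l ∈ S then 1 else 0) = if k = l then r else μ)
    (i j : Fin d) (hij : i ≠ j) :
    ∑ S ∈ Finset.powersetCard n (Finset.univ : Finset (Fin d)),
      vecX d S i j * star (vecX d S i j) = (r - μ) * d := by
  set c : Fin d → ℂ := fun k => (ZMod.stdAddChar
    (((k : ℕ) : ZMod d) * (((i : ℕ) : ZMod d) - ((j : ℕ) : ZMod d))) : ℂ) with hc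
  have hX : ∀ S, vecX d S i j = ∑ k, ((if k ∈ S then (1:ℝ) else 0 : ℝ) : ℂ) * c k := by
    intro S
    simp only [vecX, hc, apply_ite Complex.ofReal, Complex.ofReal_one, Complex.ofReal_zero]
    simp
  have hXX : ∀ S, vecX d S i j * star (vecX d S i j) = ∑ k, ∑ l, (((if k ∈ S then (1:ℝ) else 0) *
      (if l ∈ S then 1 else 0) : ℝ) : ℂ) * (c k * star (c l)) := by
    intro S
    rw [hX, star_sum, Finset.sum_mul_sum]
    refine Finset.sum_congr rfl fun k _ => Finset.sum_congr rfl fun l _ => ?_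
    rw [star_mul', ← starRingEnd_apply (((if l ∈ S then (1:ℝ) else 0 : ℝ) : ℂ)), Complex.conj_ofReal]
    push_cast
    ring
  simp_rw [hXX]
  rw [Finset.sum_comm]
  simp_rw [Finset.sum_comm (s := Finset.powersetCard n (Finset.univ : Finset (Fin d))),
    ← Finset.sum_mul, ← Complex.ofReal_sum, h]
  have hsum : ∑ k, c k = 0 := by
    rw [hc, fourier_sum, if_neg hij]
  have hunit : ∀ k, c k * star (c k) = 1 := by
    intro k
    rw [hc]
    simp only
    rw [← starRingEnd_apply, ← AddChar.map_neg_eq_conj, ← AddChar.map_add_eq_mul]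
    simp
  have e : ∀ k l : Fin d, ((if k = l then r else μ : ℝ) : ℂ) * (c k * star (c l)) =
      μ * (c k * star (c l)) + if k = l then ((r : ℂ) - μ) else 0 := by
    intro k l
    by_cases hkl : k = l
    · subst hkl
      rw [hunit, if_pos rfl, if_pos rfl]
      ring
    · simp [hkl]
  simp_rw [e, Finset.sum_add_distrib, ← Finset.mul_sum, ← star_sum, hsum]
  simp
  ring

theorem main_entries (d n : ℕ) [NeZero d] (r μ : ℝ) (hn : 1 ≤ n) (hnd : n < d) (hrμ : 0 < r - μ)
    (h : ∀ k l : Fin d, ∑ S ∈ Finset.powersetCard n (Finset.univ : Finset (Fin d)),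
      (if k ∈ S then (1:ℝ) else 0) * (if l ∈ S then 1 else 0) = if k = l then r else μ)
    (h1 : r * d = n * (Finset.powersetCard n (Finset.univ : Finset (Fin d))).card)
    (h2 : r * (n - 1) = (d - 1) * μ) (i j k l : Fin d) :
    (1 / (r - μ) : ℂ) * (if i = j ∧ k = l then ((if i = k then r else μ : ℝ) : ℂ) else 0) +
    (1 / ((r - μ) * d * 2 ^ (d + 1)) : ℂ) *
      ((∑ S ∈ Finset.powersetCard n (Finset.univ : Finset (Fin d)),
        vecX d S i j * star (vecX d S k l)) *
      if (i = j ∧ k = l) ∨ (i = k ∧ j = l) then (2 ^ (d + 1) : ℂ) else 0) =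
    (((d * n - 1) / (d - n) : ℝ) : ℂ) * (if i = j ∧ k = l then 1 else 0) +
      if i = k ∧ j = l then 1 else 0 := by
  have hrc : (r : ℂ) - μ ≠ 0 := by exact_mod_cast hrμ.ne'
  have hdc : (d : ℂ) ≠ 0 := by exact_mod_cast NeZero.ne d
  have hdn : (d : ℝ) - n ≠ 0 := by
    have : (n : ℝ) < d := by exact_mod_cast hnd
    linarith
  have hdnc : (d : ℂ) - n ≠ 0 := by exact_mod_cast hdn
  have h2c : (r : ℂ) * (n - 1) = (d - 1) * μ := by exact_mod_cast h2
  have h1c : (r : ℂ) * d = n * (Finset.powersetCard n (Finset.univ : Finset (Fin d))).card := by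
    exact_mod_cast h1
  have hcoef : (μ : ℂ) + r * n = (r - μ) * ((d * n - 1) / (d - n)) := by
    field_simp
    linear_combination (-1 - (n : ℂ)) * h2c
  by_cases hij : i = j ∧ k = l
  · obtain ⟨rfl, rfl⟩ := hij
    have hs : ∑ S ∈ Finset.powersetCard n (Finset.univ : Finset (Fin d)),
        vecX d S i i * star (vecX d S k k) = r * d * n := by
      rw [h1c, Finset.sum_congr rfl (g := fun _ => (n : ℂ) * n)]
      · simp; ring
      · intro S hS
        rw [Finset.mem_powersetCard] at hS
        simp [vecX_diag, hS.2]
    rw [hs]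
    by_cases hik : i = k
    · subst hik
      simp
      field_simp
      have := hcoef
      field_simp at this
      linear_combination this
    · simp [hik]
      field_simp
      have := hcoef
      field_simp at this
      linear_combination this
  · by_cases hik : i = k ∧ j = l
    · obtain ⟨rfl, rfl⟩ := hik
      have hne : i ≠ j := fun h => hij ⟨h, h⟩
      rw [vecX_sum d n r μ h i j hne]
      simp [hne]
      field_simp
    · simp [hij, hik]

/-- `((dn-1)/(d-n)) ψψᴴ + Σ_{i,j} a_i a_j |ij⟩⟨ij|` has Schmidt number at most `n`. -/
theorem intermediate_random_schmidt_bound (d n : ℕ) (hd : 2 ≤ d) (hn : 1 ≤ n) (hnd : n < d)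
    (a : Fin d → ℝ) (ha : ∀ i, 0 ≤ a i) (hnorm : ∑ i, a i ^ 2 = 1) :
    SchmidtNumberLE d
      ((((d : ℝ) * n - 1) / ((d : ℝ) - n)) •
          Matrix.vecMulVec (ketDiag d a) (star (ketDiag d a)) +
        Matrix.diagonal (fun p : Fin d × Fin d => ((a p.1 * a p.2 : ℝ) : ℂ))) n := by
  have : NeZero d := ⟨by omega⟩
  obtain ⟨r, μ, hr, h, h1, h2⟩ := counts d n hn hnd
  have hd1 : (2 : ℝ) ≤ d := by exact_mod_cast hd
  have hdn : (n : ℝ) < d := by exact_mod_cast hnd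
  have hrμ : 0 < r - μ := by
    have : (d - 1) * (r - μ) = r * (d - n) := by linear_combination h2
    have h3 : 0 < ((d : ℝ) - 1) * (r - μ) := by rw [this]; exact mul_pos hr (by linarith)
    exact pos_of_mul_pos_right h3 (by linarith)
  let s : Fin d → ℝ := fun i => Real.sqrt (a i)
  have hs : ∀ i, (s i : ℂ) * s i = a i := fun i => by
    rw [← Complex.ofReal_mul, Real.mul_self_sqrt (ha i)]
  let A : Finset (Fin d) → Fin d × Fin d → ℂ := fun S p =>
    ∑ k ∈ S, (if p.1 = k then (s k : ℂ) else 0) * (if p.2 = k then (s k : ℂ) else 0)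
  let B : Finset (Fin d) → ZMod (2 ^ (d + 1)) → Fin d × Fin d → ℂ := fun S t p =>
    (s p.1 * s p.2) * (vecX d S p.1 p.2 *
      (ZMod.stdAddChar (t * (2 ^ (p.1:ℕ) - 2 ^ (p.2:ℕ))) : ℂ))
  let K := Finset.powersetCard n (Finset.univ : Finset (Fin d))
  have hK : ∀ S ∈ K, S.card ≤ n := fun S hS => (Finset.mem_powersetCard.1 hS).2.le
  have hA : SchmidtNumberLE d (∑ S ∈ K, (1 / (r - μ)) • vecMulVec (A S) (star (A S))) n :=
    SN_sum _ _ fun S hS => SN_smul_single _ (by positivity) _ S (hK S hS)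
      (fun k i => if i = k then (s k : ℂ) else 0) (fun k i => if i = k then (s k : ℂ) else 0)
      (fun i j => rfl)
  have hB : SchmidtNumberLE d (∑ S ∈ K, ∑ t : ZMod (2 ^ (d + 1)),
      (1 / ((r - μ) * d * 2 ^ (d + 1))) • vecMulVec (B S t) (star (B S t))) n := by
    refine SN_sum _ _ fun S hS => SN_sum _ _ fun t _ =>
      SN_smul_single _ (by positivity) _ S (hK S hS)
      (fun k i => s i * ZMod.stdAddChar (t * 2 ^ (i:ℕ)) *
        ZMod.stdAddChar (((k : ℕ) : ZMod d) * ((i : ℕ) : ZMod d)))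
      (fun k j => s j * ZMod.stdAddChar (-(t * 2 ^ (j:ℕ))) *
        ZMod.stdAddChar (-(((k : ℕ) : ZMod d) * ((j : ℕ) : ZMod d)))) ?_
    intro i j
    simp only [B, vecX, Finset.mul_sum, Finset.sum_mul, mul_add, mul_neg, sub_eq_add_neg,
      AddChar.map_add_eq_mul]
    refine Finset.sum_congr rfl fun k _ => ?_
    ring
  convert SN_add hA hB using 1
  ext ⟨i, j⟩ ⟨k, l⟩
  have hm := main_entries d n r μ hn hnd hrμ h h1 h2 i j k l
  have hAe : ∀ S i j, A S (i, j) = (s i * s j) * (if i = j then ((if i ∈ S then (1:ℝ) else 0 : ℝ) : ℂ) else 0) := by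
    intro S i j
    by_cases hij : i = j
    · subst hij
      by_cases hi : i ∈ S <;> simp [A, hi]
    · simp only [A, hij, if_false, mul_zero]
      refine Finset.sum_eq_zero fun k _ => ?_
      by_cases hik : i = k
      · subst hik
        simp [Ne.symm hij]
      · simp [hik]
  have hAA : ∑ S ∈ K, A S (i, j) * star (A S (k, l)) = (s i * s j * s k * s l) *
      (if i = j ∧ k = l then ((if i = k then r else μ : ℝ) : ℂ) else 0) := by
    by_cases hij : i = j ∧ k = l
    · obtain ⟨rfl, rfl⟩ := hij
      rw [← h i k, if_pos ⟨rfl, rfl⟩, Complex.ofReal_sum, Finset.mul_sum]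
      refine Finset.sum_congr rfl fun S _ => ?_
      rw [hAe, hAe, if_pos rfl, if_pos rfl, ← Complex.ofReal_mul, ← Complex.ofReal_mul,
        ← starRingEnd_apply, ← Complex.ofReal_mul, ← Complex.ofReal_mul, Complex.conj_ofReal]
      push_cast
      ring
    · rw [if_neg hij, mul_zero]
      refine Finset.sum_eq_zero fun S _ => ?_
      rw [hAe, hAe]
      by_cases h' : i = j
      · have : k ≠ l := fun h'' => hij ⟨h', h''⟩
        simp [this]
      · simp [h']
  have hBB : ∑ S ∈ K, ∑ t, B S t (i, j) * star (B S t (k, l)) = (s i * s j * s k * s l) *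
      ((∑ S ∈ K, vecX d S i j * star (vecX d S k l)) *
      if (i = j ∧ k = l) ∨ (i = k ∧ j = l) then (2 ^ (d + 1) : ℂ) else 0) := by
    rw [← phase_sum, Finset.sum_mul_sum, Finset.mul_sum]
    refine Finset.sum_congr rfl fun S _ => ?_
    rw [Finset.mul_sum]
    refine Finset.sum_congr rfl fun t _ => ?_
    have e : star ((s k : ℂ) * s l) = s k * s l := by
      rw [← Complex.ofReal_mul, ← starRingEnd_apply, Complex.conj_ofReal]
    simp only [B]
    rw [star_mul', e, star_mul']
    ring
  have hR : (∑ S ∈ K, (1 / (r - μ)) • vecMulVec (A S) (star (A S)) + ∑ S ∈ K, ∑ t : ZMod (2 ^ (d + 1)),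
      (1 / ((r - μ) * d * 2 ^ (d + 1))) • vecMulVec (B S t) (star (B S t))) (i, j) (k, l) =
      (1 / (r - μ) : ℂ) * (∑ S ∈ K, A S (i, j) * star (A S (k, l))) +
      (1 / ((r - μ) * d * 2 ^ (d + 1)) : ℂ) * ∑ S ∈ K, ∑ t, B S t (i, j) * star (B S t (k, l)) := by
    simp only [Matrix.add_apply, Matrix.sum_apply, Matrix.smul_apply, vecMulVec_apply,
      Pi.star_apply, Complex.real_smul, Finset.mul_sum]
    push_cast
    rfl
  rw [hR, hAA, hBB]
  have hL : ((((d : ℝ) * n - 1) / ((d : ℝ) - n)) •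
          Matrix.vecMulVec (ketDiag d a) (star (ketDiag d a)) +
        Matrix.diagonal (fun p : Fin d × Fin d => ((a p.1 * a p.2 : ℝ) : ℂ))) (i, j) (k, l) =
      (s i * s j * s k * s l) * ((((d * n - 1) / (d - n) : ℝ) : ℂ) * (if i = j ∧ k = l then 1 else 0) +
      if i = k ∧ j = l then 1 else 0) := by
    have e1 : ketDiag d a (i, j) * star (ketDiag d a (k, l)) =
        (s i * s j * s k * s l) * (if i = j ∧ k = l then 1 else 0) := by
      by_cases hij : i = j
      · by_cases hkl : k = l
        · subst hij hkl
          simp only [ketDiag, if_true, and_self]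
          rw [← starRingEnd_apply, Complex.conj_ofReal, ← hs, ← hs]
          ring
        · simp [ketDiag, hkl]
      · simp [ketDiag, hij]
    have e2 : Matrix.diagonal (fun p : Fin d × Fin d => ((a p.1 * a p.2 : ℝ) : ℂ)) (i, j) (k, l) =
        (s i * s j * s k * s l) * if i = k ∧ j = l then 1 else 0 := by
      by_cases hik : i = k ∧ j = l
      · obtain ⟨rfl, rfl⟩ := hik
        simp only [Matrix.diagonal_apply_eq, and_self, if_true]
        push_cast
        rw [← hs, ← hs]
        ring
      · rw [Matrix.diagonal_apply_ne _ (by simpa using hik), if_neg hik, mul_zero]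
    rw [Matrix.add_apply, Matrix.smul_apply, vecMulVec_apply, Pi.star_apply, e1, e2,
      Complex.real_smul]
    ring
  rw [hL, ← hm]
  ring
end
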